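/- arXiv:2604.14995 — 10 statements merged into one kernel-verified Lean document; each statement's English description precedes it below -/
import Mathlib

section
/- Let U be a D×D unitary complex matrix whose spectrum consists of exactly d ≥ 2 distinct eigenvalues e^{iφ_1}, …, e^{iφ_d} with each φ_k ∈ [0, 2π). Then for every ε with 0 < ε ≤ 1/2 there exists a positive integer m_r with m_r ≤ (π / max_{j,k} R(φ_j, φ_k)) · (2⌈π/ε⌉)^(d−1) such that: (i) for every unit vector ψ ∈ ℂ^D, 1 − |⟨ψ, U^{m_r} ψ⟩|² ≤ ε², and (ii) there exist a unit vector φ ∈ ℂ^D and a positive integer m′ ≤ m_r such that 1 − |⟨φ, U^{m′} φ⟩|² > ε². -/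
open Matrix Real

/-!
If `V` is unitary and `ψ` is a unit vector, then `1 - |⟪ψ, V ψ⟫|²` is the squared distance from
`V ψ` to the line through `ψ`, hence at most `‖V - c‖²` for every scalar `c`. The spectral theorem
bounds `‖V - c‖` by the largest distance from an eigenvalue of `V` to `c`, so recurrence of `V ^ m`
only asks that the differences of the eigenphases be simultaneously close to `0` modulo `2 π`, which
a volume pigeonhole on the torus provides.

The search is carried out among the powers of `V = U ^ n`, where `n` is so large that the widest gap
`ρ` between eigenphases of `U` has been stretched to at least `π / 2`, although `n ≤ π / ρ`. The
equal superposition of two eigenvectors realising that gap is then already far from its initial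
state at time `n`, and `n` is at most the recurrence time `n * m`.
-/

open MeasureTheory in
theorem exists_forall_norm_nsmul_le {T : ℝ} [hT : Fact (0 < T)] {κ : Type*} [Fintype κ]
    (ξ : κ → AddCircle T) {Q : ℕ} (hQ : 0 < Q) :
    ∃ m : ℕ, 0 < m ∧ m ≤ Q ^ Fintype.card κ ∧ ∀ k, ‖m • ξ k‖ ≤ T / Q := by
  have hTQ : 0 ≤ T / Q := div_nonneg hT.out.le Q.cast_nonneg
  have hball (x : AddCircle T) :
      volume (Metric.closedBall x (T / Q / 2)) = ENNReal.ofReal (T / Q) := by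
    rw [AddCircle.volume_closedBall, mul_div_cancel₀ _ two_ne_zero,
      min_eq_right (div_le_self hT.out.le (Nat.one_le_cast.2 hQ))]
  have huniv : volume (Set.univ : Set (AddCircle T)) = Q * ENNReal.ofReal (T / Q) := by
    rw [AddCircle.measure_univ, ← ENNReal.ofReal_natCast, ← ENNReal.ofReal_mul Q.cast_nonneg,
      mul_div_cancel₀ _ (Nat.cast_ne_zero.2 hQ.ne')]
  have hcover : volume (Set.univ : Set (κ → AddCircle T)) ≤
      (Q ^ Fintype.card κ + 1) • volume (Metric.closedBall (0 : κ → AddCircle T) (T / Q / 2)) := by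
    calc volume (Set.univ : Set (κ → AddCircle T))
        = Q ^ Fintype.card κ * ENNReal.ofReal (T / Q) ^ Fintype.card κ := by
          rw [volume_pi, Measure.pi_univ]
          simp only [huniv, Finset.prod_const, Finset.card_univ, mul_pow]
      _ = (Q ^ Fintype.card κ) • volume (Metric.closedBall (0 : κ → AddCircle T) (T / Q / 2)) := by
          rw [MeasureTheory.volume_pi_closedBall _ (div_nonneg hTQ zero_le_two)]
          simp only [hball, Finset.prod_const, Finset.card_univ, nsmul_eq_mul, Nat.cast_pow]
      _ ≤ _ := nsmul_le_nsmul_left zero_le (Nat.le_succ _)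
  obtain ⟨m, ⟨hm, hmQ⟩, hmξ⟩ :=
    NormedAddCommGroup.exists_norm_nsmul_le ξ (pow_pos hQ (Fintype.card κ)) (T / Q) hcover
  exact ⟨m, hm, hmQ, (pi_norm_le_iff_of_nonneg hTQ).1 hmξ⟩

theorem exists_forall_norm_nsmul_sub_le {T : ℝ} [hT : Fact (0 < T)] {κ : Type*} [Fintype κ]
    (θ : κ → AddCircle T) (k₀ : κ) {Q : ℕ} (hQ : 0 < Q) :
    ∃ m : ℕ, 0 < m ∧ m ≤ Q ^ (Fintype.card κ - 1) ∧ ∀ k, ‖m • (θ k - θ k₀)‖ ≤ T / Q := by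
  classical
  obtain ⟨m, hm, hmQ, hmθ⟩ :=
    exists_forall_norm_nsmul_le (fun k : {k // k ≠ k₀} ↦ θ k - θ k₀) hQ
  have hcard : Fintype.card {k // k ≠ k₀} = Fintype.card κ - 1 := Set.card_ne_eq k₀
  rw [hcard] at hmQ
  refine ⟨m, hm, hmQ, fun k ↦ ?_⟩
  obtain rfl | hk := eq_or_ne k k₀
  · simpa using div_nonneg hT.out.le Q.cast_nonneg
  · exact hmθ ⟨k, hk⟩

section Angle

theorem norm_angle_coe_eq_abs {t : ℝ} (ht : |t| ≤ π) : ‖(t : Angle)‖ = |t| :=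
  (AddCircle.norm_coe_eq_abs_iff (2 * π) two_pi_pos.ne').2 <| by
    rwa [abs_of_pos two_pi_pos, mul_div_cancel_left₀ _ two_ne_zero]

theorem norm_angle_eq_abs_toReal (θ : Angle) : ‖θ‖ = |θ.toReal| := by
  rw [← norm_angle_coe_eq_abs θ.abs_toReal_le_pi, Angle.coe_toReal]

theorem norm_angle_coe_eq_min {t : ℝ} (ht : |t| ≤ 2 * π) :
    ‖(t : Angle)‖ = min |t| (2 * π - |t|) := by
  obtain h | h := le_total |t| π
  · rw [min_eq_left (by linarith), norm_angle_coe_eq_abs h]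
  · have habs : |(|t| - 2 * π)| = 2 * π - |t| := by rw [abs_sub_comm, abs_of_nonneg (by linarith)]
    have hcoe : ‖(t : Angle)‖ = ‖((|t| - 2 * π : ℝ) : Angle)‖ := by
      rw [Angle.coe_sub, Angle.coe_two_pi, sub_zero]
      obtain ht' | ht' := abs_choice t <;> simp only [ht', Angle.coe_neg, norm_neg]
    rw [min_eq_right (by linarith), hcoe, norm_angle_coe_eq_abs (by linarith), habs]

theorem norm_angle_coe_sub_coe_eq_min {s t : ℝ} (hs : s ∈ Set.Ico 0 (2 * π))
    (ht : t ∈ Set.Ico 0 (2 * π)) :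
    ‖(s - t : Angle)‖ = min |s - t| (2 * π - |s - t|) := by
  rw [← Angle.coe_sub, norm_angle_coe_eq_min]
  exact abs_sub_le_iff.2 ⟨by linarith [hs.2, ht.1], by linarith [ht.2, hs.1]⟩

theorem injOn_angle_coe : Set.InjOn ((↑) : ℝ → Angle) (Set.Ico 0 (2 * π)) := by
  have : Fact (0 < 2 * π) := ⟨two_pi_pos⟩
  intro s hs t ht h
  exact (AddCircle.coe_eq_coe_iff_of_mem_Ico (a := 0) (by simpa using hs) (by simpa using ht)).1 h

theorem norm_nsmul_angle {θ : Angle} {n : ℕ} (h : n * ‖θ‖ ≤ π) : ‖n • θ‖ = n * ‖θ‖ := by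
  have habs : |n • θ.toReal| = n * ‖θ‖ := by
    rw [nsmul_eq_mul, abs_mul, Nat.abs_cast, norm_angle_eq_abs_toReal]
  rw [← habs, ← norm_angle_coe_eq_abs (habs.trans_le h), Angle.coe_nsmul, Angle.coe_toReal]

theorem exists_pi_div_two_le_norm_nsmul {θ : Angle} (hθ : θ ≠ 0) :
    ∃ n : ℕ, 0 < n ∧ n ≤ π / ‖θ‖ ∧ π / 2 ≤ ‖n • θ‖ := by
  have hθ0 : 0 < ‖θ‖ := norm_pos_iff.2 hθ
  have hθπ : ‖θ‖ ≤ π := (norm_angle_eq_abs_toReal θ).trans_le θ.abs_toReal_le_pi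
  have hn : 0 < ⌊π / ‖θ‖⌋₊ := Nat.floor_pos.2 ((one_le_div₀ hθ0).2 hθπ)
  have hn_le : ⌊π / ‖θ‖⌋₊ ≤ π / ‖θ‖ := Nat.floor_le (by positivity)
  have hn_lt : π < (⌊π / ‖θ‖⌋₊ + 1) * ‖θ‖ := (div_lt_iff₀ hθ0).1 (Nat.lt_floor_add_one _)
  have hn_one : (1 : ℝ) ≤ ⌊π / ‖θ‖⌋₊ := Nat.one_le_cast.2 hn
  refine ⟨_, hn, hn_le, ?_⟩
  rw [norm_nsmul_angle ((le_div_iff₀ hθ0).1 hn_le)]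
  nlinarith

theorem norm_toCircle_sub_toCircle_sq (θ ψ : Angle) :
    ‖(θ.toCircle - ψ.toCircle : ℂ)‖ ^ 2 = 2 - 2 * (θ - ψ).cos := by
  have hre : (ψ.toCircle * starRingEnd ℂ θ.toCircle : ℂ).re = (θ - ψ).cos := by
    rw [← Circle.coe_inv_eq_conj, ← Circle.coe_mul, ← Angle.toCircle_neg, ← Angle.toCircle_add,
      ← sub_eq_add_neg, ← neg_sub, ← Angle.cos_neg (θ - ψ), Angle.coe_toCircle]
    simp
  rw [norm_sub_sq (𝕜 := ℂ), Circle.norm_coe, Circle.norm_coe, RCLike.inner_apply,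
    RCLike.re_eq_complex_re, hre]
  ring

theorem norm_toCircle_sub_toCircle_le (θ ψ : Angle) :
    ‖(θ.toCircle - ψ.toCircle : ℂ)‖ ≤ ‖θ - ψ‖ := by
  have hcos : 1 - ‖θ - ψ‖ ^ 2 / 2 ≤ (θ - ψ).cos := by
    rw [norm_angle_eq_abs_toReal, sq_abs, ← Angle.cos_toReal]
    exact one_sub_sq_div_two_le_cos
  refine (sq_le_sq₀ (norm_nonneg _) (norm_nonneg _)).1 ?_
  rw [norm_toCircle_sub_toCircle_sq]
  linarith

theorem two_le_norm_toCircle_sub_toCircle_sq {θ ψ : Angle} (h : π / 2 ≤ ‖θ - ψ‖) :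
    2 ≤ ‖(θ.toCircle - ψ.toCircle : ℂ)‖ ^ 2 := by
  have hcos : (θ - ψ).cos ≤ 0 := by
    rw [norm_angle_eq_abs_toReal] at h
    exact not_lt.1 fun hpos ↦ h.not_gt (Angle.cos_pos_iff_abs_toReal_lt_pi_div_two.1 hpos)
  rw [norm_toCircle_sub_toCircle_sq]
  linarith

theorem toCircle_nsmul (θ : Angle) (n : ℕ) : (n • θ).toCircle = θ.toCircle ^ n := by
  induction n with
  | zero => simp
  | succ n ih => rw [succ_nsmul, Angle.toCircle_add, ih, pow_succ]

end Angle

section CStarAlgebra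

variable {A : Type*} [CStarAlgebra A]

theorem norm_pow_sub_algebraMap_le {a : A} [IsStarNormal a] {n : ℕ} {c : ℂ} {δ : ℝ} (hδ : 0 ≤ δ)
    (h : ∀ z ∈ spectrum ℂ a, ‖z ^ n - c‖ ≤ δ) : ‖a ^ n - algebraMap ℂ A c‖ ≤ δ := by
  have hcfc : a ^ n - algebraMap ℂ A c = cfc (fun z : ℂ ↦ z ^ n - c) a := by
    rw [cfc_sub _ _ a, cfc_pow_id a n, cfc_const c a]
  rw [hcfc]
  exact norm_cfc_le hδ h

theorem exists_norm_pow_sub_algebraMap_le {κ : Type*} [Fintype κ] [Nonempty κ] {a : A}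
    [IsStarNormal a] {θ : κ → Angle}
    (ha : spectrum ℂ a ⊆ Set.range fun k ↦ ((θ k).toCircle : ℂ)) {ε : ℝ} (hε : 0 < ε) :
    ∃ m : ℕ, 0 < m ∧ m ≤ (2 * ⌈π / ε⌉₊) ^ (Fintype.card κ - 1) ∧
      ∃ c : ℂ, ‖a ^ m - algebraMap ℂ A c‖ ≤ ε := by
  have hN : 0 < ⌈π / ε⌉₊ := Nat.ceil_pos.2 (div_pos pi_pos hε)
  have hNε : 2 * π / (2 * ⌈π / ε⌉₊ : ℕ) ≤ ε := by
    rw [Nat.cast_mul, Nat.cast_two, mul_div_mul_left _ _ two_ne_zero]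
    exact (div_le_comm₀ hε (Nat.cast_pos.2 hN)).1 (Nat.le_ceil _)
  have : Fact (0 < 2 * π) := ⟨two_pi_pos⟩
  let k₀ : κ := Classical.arbitrary κ
  obtain ⟨m, hm, hmN, hmθ⟩ :=
    exists_forall_norm_nsmul_sub_le (T := 2 * π) θ k₀ (Nat.mul_pos two_pos hN)
  refine ⟨m, hm, hmN, (m • θ k₀).toCircle, norm_pow_sub_algebraMap_le hε.le fun z hz ↦ ?_⟩
  obtain ⟨k, rfl⟩ := ha hz
  calc ‖((θ k).toCircle : ℂ) ^ m - (m • θ k₀).toCircle‖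
      = ‖((m • θ k).toCircle - (m • θ k₀).toCircle : ℂ)‖ := by
        rw [toCircle_nsmul (θ k), Circle.coe_pow]
    _ ≤ ‖m • (θ k - θ k₀)‖ := by
        rw [nsmul_sub]
        exact norm_toCircle_sub_toCircle_le _ _
    _ ≤ ε := (hmθ k).trans hNε

end CStarAlgebra

section Hilbert

open scoped InnerProductSpace

variable {E : Type*} [NormedAddCommGroup E] [InnerProductSpace ℂ E]

theorem one_sub_norm_inner_sq_le {ψ χ : E} (hψ : ‖ψ‖ = 1) (hχ : ‖χ‖ = 1) (c : ℂ) :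
    1 - ‖⟪ψ, χ⟫_ℂ‖ ^ 2 ≤ ‖χ - c • ψ‖ ^ 2 := by
  have hexp : ‖χ - c • ψ‖ ^ 2 = 1 - ‖⟪ψ, χ⟫_ℂ‖ ^ 2 + ‖⟪ψ, χ⟫_ℂ - c‖ ^ 2 := by
    rw [norm_sub_sq (𝕜 := ℂ) χ, norm_sub_sq (𝕜 := ℂ) ⟪ψ, χ⟫_ℂ, inner_smul_right, norm_smul, hψ, hχ,
      ← inner_conj_symm χ ψ, RCLike.inner_apply]
    ring
  rw [hexp]
  exact le_add_of_nonneg_right (sq_nonneg _)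

theorem one_sub_norm_inner_apply_sq_le {V : E →L[ℂ] E} {ψ : E} (hψ : ‖ψ‖ = 1) (hVψ : ‖V ψ‖ = 1)
    (c : ℂ) : 1 - ‖⟪ψ, V ψ⟫_ℂ‖ ^ 2 ≤ ‖V - algebraMap ℂ (E →L[ℂ] E) c‖ ^ 2 := by
  refine (one_sub_norm_inner_sq_le hψ hVψ c).trans ?_
  gcongr
  simpa [hψ] using (V - algebraMap ℂ (E →L[ℂ] E) c).le_opNorm ψ

theorem exists_one_sub_norm_inner_apply_sq_eq {V : E →L[ℂ] E} {v w : E} {x y : ℂ}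
    (hv : ‖v‖ = 1) (hw : ‖w‖ = 1) (hvw : ⟪v, w⟫_ℂ = 0) (hVv : V v = x • v) (hVw : V w = y • w)
    (hx : ‖x‖ = 1) (hy : ‖y‖ = 1) :
    ∃ χ : E, ‖χ‖ = 1 ∧ 1 - ‖⟪χ, V χ⟫_ℂ‖ ^ 2 = ‖x - y‖ ^ 2 / 4 := by
  have hwv : ⟪w, v⟫_ℂ = 0 := inner_eq_zero_symm.1 hvw
  have hnorm : ‖v + w‖ ^ 2 = 2 := by
    rw [norm_add_sq (𝕜 := ℂ), hv, hw, hvw, map_zero]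
    norm_num
  have hinner : ⟪v + w, V (v + w)⟫_ℂ = x + y := by
    simp [hVv, hVw, hvw, hwv, hv, hw]
  have hne : v + w ≠ 0 := by
    rintro h
    simp [h] at hnorm
  refine ⟨(‖v + w‖⁻¹ : ℂ) • (v + w), norm_smul_inv_norm hne, ?_⟩
  have hχ : ‖⟪(‖v + w‖⁻¹ : ℂ) • (v + w), V ((‖v + w‖⁻¹ : ℂ) • (v + w))⟫_ℂ‖ = ‖x + y‖ / 2 := by
    rw [map_smul, inner_smul_left, inner_smul_right, hinner, ← mul_assoc, norm_mul, norm_mul,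
      RCLike.norm_conj, norm_inv, Complex.norm_real, norm_norm, ← mul_inv, ← sq, hnorm,
      inv_mul_eq_div]
  have hpar := parallelogram_law_with_norm ℂ x y
  rw [hx, hy] at hpar
  rw [hχ]
  linarith

variable [CompleteSpace E]

theorem inner_eq_zero_of_apply_eq_smul_of_ne {T : E →L[ℂ] E} [IsStarNormal T] {v w : E} {x y : ℂ}
    (hv : T v = x • v) (hw : T w = y • w) (hxy : x ≠ y) : ⟪v, w⟫_ℂ = 0 := by
  let S : E →L[ℂ] E := T - y • 1
  have hS (u : E) : S u = T u - y • u := rfl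
  have hcomm : Commute T (star (y • 1 : E →L[ℂ] E)) := by
    rw [star_smul, star_one]
    exact (Commute.one_right T).smul_right _
  have hSw : w ∈ S.rangeᗮ := by
    rw [ContinuousLinearMap.IsStarNormal.orthogonal_range hcomm.isStarNormal_sub, LinearMap.mem_ker]
    exact (hS w).trans (sub_eq_zero.2 hw)
  have hSv : ⟪(x - y) • v, w⟫_ℂ = 0 := by
    rw [sub_smul, ← hv]
    exact hSw _ ⟨v, hS v⟩
  rw [inner_smul_left, mul_eq_zero, map_eq_zero, sub_eq_zero] at hSv
  exact hSv.resolve_left hxy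

theorem exists_unit_eigenvector {T : E →L[ℂ] E} [IsStarNormal T]
    (hfin : (spectrum ℂ T).Finite) {z : ℂ} (hz : z ∈ spectrum ℂ T) :
    ∃ v : E, ‖v‖ = 1 ∧ T v = z • v := by
  -- The spectrum is discrete, so the indicator of `z` gives a projection onto the eigenspace.
  let δ : ℂ → ℂ := Pi.single z 1
  have hδ : ContinuousOn δ (spectrum ℂ T) := hfin.continuousOn δ
  have hP : cfc δ T ≠ 0 := by
    intro h
    have hnorm := norm_apply_le_norm_cfc δ T hz hδ
    simp only [δ, Pi.single_eq_same, norm_one, h, norm_zero] at hnorm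
    exact hnorm.not_gt one_pos
  have hTP : T * cfc δ T = z • cfc δ T := by
    calc T * cfc δ T = cfc (fun w : ℂ ↦ w * δ w) T := by rw [cfc_mul _ δ T, cfc_id' ℂ T]
      _ = cfc (fun w : ℂ ↦ z * δ w) T := by
          congr 1
          ext w
          obtain rfl | hw := eq_or_ne w z
          · rfl
          · simp [δ, hw]
      _ = z • cfc δ T := cfc_const_mul z δ T
  obtain ⟨u, hu⟩ : ∃ u, cfc δ T u ≠ 0 := by simpa [ContinuousLinearMap.ext_iff] using hP
  refine ⟨(‖cfc δ T u‖⁻¹ : ℂ) • cfc δ T u, norm_smul_inv_norm hu, ?_⟩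
  rw [map_smul, smul_comm]
  exact congr(_ • $hTP u)

theorem exists_one_sub_norm_inner_apply_sq_eq_of_mem_spectrum {V : E →L[ℂ] E}
    (hV : V ∈ unitary (E →L[ℂ] E)) (hfin : (spectrum ℂ V).Finite) {x y : ℂ}
    (hx : x ∈ spectrum ℂ V) (hy : y ∈ spectrum ℂ V) (hxy : x ≠ y) :
    ∃ χ : E, ‖χ‖ = 1 ∧ 1 - ‖⟪χ, V χ⟫_ℂ‖ ^ 2 = ‖x - y‖ ^ 2 / 4 := by
  have : IsStarNormal V := isStarNormal_of_mem_unitary hV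
  have hnorm {z : ℂ} (hz : z ∈ spectrum ℂ V) : ‖z‖ = 1 := by
    simpa using Unitary.spectrum_subset_circle ⟨V, hV⟩ hz
  obtain ⟨v, hv, hVv⟩ := exists_unit_eigenvector hfin hx
  obtain ⟨w, hw, hVw⟩ := exists_unit_eigenvector hfin hy
  have hvw : ⟪v, w⟫_ℂ = 0 := inner_eq_zero_of_apply_eq_smul_of_ne hVv hVw hxy
  exact exists_one_sub_norm_inner_apply_sq_eq hv hw hvw hVv hVw (hnorm hx) (hnorm hy)

theorem exists_half_le_one_sub_norm_inner_apply_sq {V : E →L[ℂ] E}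
    (hV : V ∈ unitary (E →L[ℂ] E)) (hfin : (spectrum ℂ V).Finite) {α β : Angle}
    (hα : (α.toCircle : ℂ) ∈ spectrum ℂ V) (hβ : (β.toCircle : ℂ) ∈ spectrum ℂ V)
    (hαβ : π / 2 ≤ ‖α - β‖) : ∃ χ : E, ‖χ‖ = 1 ∧ 1 / 2 ≤ 1 - ‖⟪χ, V χ⟫_ℂ‖ ^ 2 := by
  have hchord : 2 ≤ ‖(α.toCircle - β.toCircle : ℂ)‖ ^ 2 := two_le_norm_toCircle_sub_toCircle_sq hαβ
  have hne : (α.toCircle : ℂ) ≠ β.toCircle := by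
    intro h
    rw [h, sub_self, norm_zero] at hchord
    norm_num at hchord
  obtain ⟨χ, hχ, hVχ⟩ := exists_one_sub_norm_inner_apply_sq_eq_of_mem_spectrum hV hfin hα hβ hne
  exact ⟨χ, hχ, by linarith⟩

theorem recurrence_time_unitary_dirichlet_general {κ : Type*} [Fintype κ] {U : E →L[ℂ] E}
    (hU : U ∈ unitary (E →L[ℂ] E)) {θ : κ → Angle}
    (hspec : spectrum ℂ U = Set.range fun k ↦ ((θ k).toCircle : ℂ)) (hθ : ∃ j k, θ j ≠ θ k)
    {ε : ℝ} (hε0 : 0 < ε) (hε1 : ε ^ 2 < 1 / 2) :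
    ∃ mr : ℕ, 0 < mr ∧
      mr ≤ (π / ⨆ p : κ × κ, ‖θ p.1 - θ p.2‖) * (2 * ⌈π / ε⌉ : ℝ) ^ (Fintype.card κ - 1) ∧
      (∀ ψ : E, ‖ψ‖ = 1 → 1 - ‖⟪ψ, (U ^ mr) ψ⟫_ℂ‖ ^ 2 ≤ ε ^ 2) ∧
      ∃ χ : E, ‖χ‖ = 1 ∧ ∃ m' : ℕ, 0 < m' ∧ m' ≤ mr ∧ ε ^ 2 < 1 - ‖⟪χ, (U ^ m') χ⟫_ℂ‖ ^ 2 := by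
  obtain ⟨j₀, k₀, hjk₀⟩ := hθ
  have : Nonempty κ := ⟨j₀⟩
  obtain ⟨⟨j, k⟩, hjk⟩ := exists_eq_ciSup_of_finite (f := fun p : κ × κ ↦ ‖θ p.1 - θ p.2‖)
  have hne : θ j - θ k ≠ 0 := by
    rw [← norm_pos_iff]
    refine (norm_sub_pos_iff.2 hjk₀).trans_le (hjk ▸ ?_)
    exact le_ciSup (f := fun p : κ × κ ↦ ‖θ p.1 - θ p.2‖) (Set.finite_range _).bddAbove (j₀, k₀)
  obtain ⟨n, hn, hn_le, hnθ⟩ := exists_pi_div_two_le_norm_nsmul hne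
  have hV : U ^ n ∈ unitary (E →L[ℂ] E) := pow_mem hU n
  have : IsStarNormal (U ^ n) := isStarNormal_of_mem_unitary hV
  have hspecV : spectrum ℂ (U ^ n) = Set.range fun k ↦ ((n • θ k).toCircle : ℂ) := by
    rw [spectrum.map_pow_of_pos U hn, hspec, ← Set.range_comp]
    simp only [toCircle_nsmul, Circle.coe_pow, Function.comp_def]
  obtain ⟨m, hm, hm_le, c, hc⟩ := exists_norm_pow_sub_algebraMap_le hspecV.subset hε0
  refine ⟨n * m, Nat.mul_pos hn hm, ?_, fun ψ hψ ↦ ?_, ?_⟩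
  · rw [← hjk, ← natCast_ceil_eq_intCast_ceil (by positivity), Nat.cast_mul]
    gcongr
    exact_mod_cast hm_le
  · rw [pow_mul]
    refine (one_sub_norm_inner_apply_sq_le hψ ?_ c).trans (by gcongr)
    rw [ContinuousLinearMap.norm_map_of_mem_unitary (pow_mem hV m), hψ]
  · rw [nsmul_sub] at hnθ
    obtain ⟨χ, hχ, hVχ⟩ := exists_half_le_one_sub_norm_inner_apply_sq hV
      (hspecV ▸ Set.finite_range _) (hspecV ▸ Set.mem_range_self j)
      (hspecV ▸ Set.mem_range_self k) hnθ
    exact ⟨χ, hχ, n, hn, Nat.le_mul_of_pos_right n hm, by linarith⟩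

end Hilbert

section EuclideanSpace

open scoped InnerProductSpace

variable {ι : Type*} [Fintype ι]

theorem inner_toEuclideanCLM_apply [DecidableEq ι] (A : Matrix ι ι ℂ) (v w : EuclideanSpace ℂ ι) :
    ⟪v, toEuclideanCLM (𝕜 := ℂ) A w⟫_ℂ = star v.ofLp ⬝ᵥ (A *ᵥ w.ofLp) := by
  rw [EuclideanSpace.inner_eq_star_dotProduct, ofLp_toEuclideanCLM, dotProduct_comm]

theorem star_dotProduct_self_eq_one_iff (v : ι → ℂ) :
    star v ⬝ᵥ v = 1 ↔ ‖WithLp.toLp 2 v‖ = 1 := by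
  rw [dotProduct_comm, ← EuclideanSpace.inner_toLp_toLp, inner_self_eq_norm_sq_to_K,
    ← RCLike.ofReal_pow, ← RCLike.ofReal_one, RCLike.ofReal_inj]
  exact pow_eq_one_iff_of_nonneg (norm_nonneg (WithLp.toLp 2 v)) two_ne_zero

end EuclideanSpace

theorem recurrence_time_unitary_dirichlet
    (D d : ℕ) (hd : 2 ≤ d) (U : Matrix (Fin D) (Fin D) ℂ)
    (hU : U ∈ Matrix.unitaryGroup (Fin D) ℂ)
    (φ : Fin d → ℝ) (hφ : ∀ k, 0 ≤ φ k ∧ φ k < 2 * π)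
    (hφinj : Function.Injective φ)
    (hspec : spectrum ℂ U = Set.range (fun k => Complex.exp (Complex.I * φ k)))
    (ε : ℝ) (hε0 : 0 < ε) (hε1 : ε ≤ 1 / 2) :
    ∃ mr : ℕ, 0 < mr ∧
      (mr : ℝ) ≤ (π / ⨆ p : Fin d × Fin d, min |φ p.1 - φ p.2| (2 * π - |φ p.1 - φ p.2|)) *
        (2 * ⌈π / ε⌉ : ℝ) ^ (d - 1) ∧
      (∀ ψ : Fin D → ℂ, star ψ ⬝ᵥ ψ = 1 →
        1 - ‖star ψ ⬝ᵥ ((U ^ mr) *ᵥ ψ)‖ ^ 2 ≤ ε ^ 2) ∧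
      (∃ χ : Fin D → ℂ, star χ ⬝ᵥ χ = 1 ∧ ∃ m' : ℕ, 0 < m' ∧ m' ≤ mr ∧
        1 - ‖star χ ⬝ᵥ ((U ^ m') *ᵥ χ)‖ ^ 2 > ε ^ 2) := by
  let θ : Fin d → Angle := fun k ↦ φ k
  have hR (p : Fin d × Fin d) :
      ‖θ p.1 - θ p.2‖ = min |φ p.1 - φ p.2| (2 * π - |φ p.1 - φ p.2|) :=
    norm_angle_coe_sub_coe_eq_min (hφ p.1) (hφ p.2)
  have hspecθ : spectrum ℂ (toEuclideanCLM (n := Fin D) (𝕜 := ℂ) U) =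
      Set.range fun k ↦ ((θ k).toCircle : ℂ) := by
    simp only [AlgEquiv.spectrum_eq, hspec, θ, Angle.toCircle_coe, Circle.coe_exp, mul_comm]
  have hθ : ∃ j k, θ j ≠ θ k :=
    ⟨⟨0, by omega⟩, ⟨1, by omega⟩, fun h ↦ by simpa using hφinj (injOn_angle_coe (hφ _) (hφ _) h)⟩
  obtain ⟨mr, hmr, hbound, hclose, χ, hχ, m', hm', hm'_le, hfar⟩ :=
    recurrence_time_unitary_dirichlet_general (Unitary.map_mem toEuclideanCLM hU) hspecθ hθ hε0
      (by nlinarith)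
  simp only [hR, Fintype.card_fin, ← map_pow, inner_toEuclideanCLM_apply] at hbound hclose hfar
  exact ⟨mr, hmr, hbound, fun ψ hψ ↦ hclose _ ((star_dotProduct_self_eq_one_iff ψ).1 hψ), χ.ofLp,
    (star_dotProduct_self_eq_one_iff _).2 hχ, m', hm', hm'_le, hfar⟩
end

section
/- Let d ≥ 2 and let α_1, …, α_d be distinct real numbers, and let N be a positive integer. Then there exist integers l_1, …, l_d and an integer q with 1 ≤ q ≤ (2N)^(d−1) such that |(α_i − α_j)·q − (l_i − l_j)| < 1/N for all i, j ∈ {1, …, d}. -/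
/-!
Subtracting `α i₀` leaves only `d - 1` nonzero numbers `α i - α i₀`. Dirichlet's simultaneous
approximation theorem, with the cube `[0, 1)^(d - 1)` cut into cells of side `1 / (2N)`, brings
their multiples by a common `q` within `1 / (2N)` of integers, and each `α i - α j` is a difference
of two of them.
-/

section FloorRing

variable {R : Type*} [Ring R] [LinearOrder R] [IsStrictOrderedRing R] [FloorRing R]

theorem floor_natCast_mul_fract_mem_Ico {M : ℕ} (hM : 0 < M) (x : R) :
    ⌊(M : R) * Int.fract x⌋ ∈ Finset.Ico (0 : ℤ) M := by
  have hM' : (0 : R) < M := Nat.cast_pos.mpr hM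
  rw [Finset.mem_Ico, Int.floor_nonneg, Int.floor_lt, Int.cast_natCast]
  exact ⟨mul_nonneg hM'.le (Int.fract_nonneg x), mul_lt_of_lt_one_right hM' (Int.fract_lt_one x)⟩

theorem abs_sub_sub_round_sub_le_abs_fract_sub_fract (x y : R) :
    |x - y - round (x - y)| ≤ |Int.fract x - Int.fract y| :=
  calc |x - y - round (x - y)| ≤ |x - y - (⌊x⌋ - ⌊y⌋ : ℤ)| := round_le _ _
    _ = |Int.fract x - Int.fract y| := by
      rw [Int.cast_sub, sub_sub_sub_comm, Int.self_sub_floor, Int.self_sub_floor]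

end FloorRing

section SimultaneousApproximation

variable {ι K : Type*} [Field K] [LinearOrder K] [IsStrictOrderedRing K] [FloorRing K]

theorem abs_sub_lt_one_div_of_floor_mul_eq_floor_mul {c x y : K} (hc : 0 < c)
    (h : ⌊c * x⌋ = ⌊c * y⌋) : |x - y| < 1 / c := by
  rw [lt_div_iff₀' hc, ← abs_of_pos hc, ← abs_mul, mul_sub]
  exact Int.abs_sub_lt_one_of_floor_eq_floor h

theorem exists_ne_forall_abs_fract_sub_fract_lt [Fintype ι] {κ : Type*} {s : Finset κ} {M : ℕ}
    (hM : 0 < M) (hs : M ^ Fintype.card ι < s.card) (x : κ → ι → K) :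
    ∃ a ∈ s, ∃ b ∈ s, a ≠ b ∧ ∀ i, |Int.fract (x a i) - Int.fract (x b i)| < 1 / M := by
  classical
  let cell (a : κ) (i : ι) : ℤ := ⌊(M : K) * Int.fract (x a i)⌋
  let cells : Finset (ι → ℤ) := Fintype.piFinset fun _ ↦ Finset.Ico 0 (M : ℤ)
  have card_cells : cells.card = M ^ Fintype.card ι := by simp [cells]
  have cell_mem : ∀ a ∈ s, cell a ∈ cells := fun a _ ↦
    Fintype.mem_piFinset.mpr fun i ↦ floor_natCast_mul_fract_mem_Ico hM (x a i)
  obtain ⟨a, ha, b, hb, hab, hcell⟩ :=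
    Finset.exists_ne_map_eq_of_card_lt_of_maps_to (card_cells ▸ hs) cell_mem
  exact ⟨a, ha, b, hb, hab, fun i ↦
    abs_sub_lt_one_div_of_floor_mul_eq_floor_mul (Nat.cast_pos.mpr hM) (congrFun hcell i)⟩

theorem exists_int_forall_abs_mul_sub_round_lt [Fintype ι] (β : ι → K) {M : ℕ} (hM : 0 < M) :
    ∃ q : ℤ, 1 ≤ q ∧ q ≤ M ^ Fintype.card ι ∧ ∀ i, |β i * q - round (β i * q)| < 1 / M := by
  have hcard : M ^ Fintype.card ι < (Finset.Icc (0 : ℤ) (M ^ Fintype.card ι : ℕ)).card := by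
    simp
  obtain ⟨a, ha, b, hb, hab, hfract⟩ :=
    exists_ne_forall_abs_fract_sub_fract_lt hM hcard fun (k : ℤ) i ↦ β i * k
  wlog hlt : b < a generalizing a b
  · exact this b hb a ha hab.symm (fun i ↦ abs_sub_comm (Int.fract (β i * a)) _ ▸ hfract i)
      (hab.lt_of_le (not_lt.mp hlt))
  rw [Finset.mem_Icc, Nat.cast_pow] at ha hb
  refine ⟨a - b, by omega, by omega, fun i ↦ ?_⟩
  rw [Int.cast_sub, mul_sub]
  exact (abs_sub_sub_round_sub_le_abs_fract_sub_fract _ _).trans_lt (hfract i)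

theorem exists_int_forall_abs_sub_mul_sub_round_lt [Fintype ι] (α : ι → K) (i₀ : ι) {M : ℕ}
    (hM : 0 < M) :
    ∃ q : ℤ, 1 ≤ q ∧ q ≤ M ^ (Fintype.card ι - 1) ∧
      ∀ i, |(α i - α i₀) * q - round ((α i - α i₀) * q)| < 1 / M := by
  classical
  obtain ⟨q, hq, hqM, happrox⟩ :=
    exists_int_forall_abs_mul_sub_round_lt (fun i : {i // i ≠ i₀} ↦ α i - α i₀) hM
  have hcard : Fintype.card {i // i ≠ i₀} = Fintype.card ι - 1 := Set.card_ne_eq i₀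
  refine ⟨q, hq, hcard ▸ hqM, fun i ↦ ?_⟩
  obtain rfl | hi := eq_or_ne i i₀
  · simpa using hM
  · exact happrox ⟨i, hi⟩

theorem diff_approx_dirichlet_general [Fintype ι] [Nonempty ι] (α : ι → K) {N : ℕ} (hN : 0 < N) :
    ∃ (l : ι → ℤ) (q : ℤ), 1 ≤ q ∧ q ≤ (2 * N) ^ (Fintype.card ι - 1) ∧
      ∀ i j, |(α i - α j) * q - (l i - l j)| < 1 / N := by
  obtain ⟨i₀⟩ := ‹Nonempty ι›
  obtain ⟨q, hq, hqN, happrox⟩ :=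
    exists_int_forall_abs_sub_mul_sub_round_lt α i₀ (M := 2 * N) (by omega)
  let l (i : ι) : ℤ := round ((α i - α i₀) * q)
  refine ⟨l, q, hq, mod_cast hqN, fun i j ↦ ?_⟩
  calc |(α i - α j) * q - (l i - l j)|
      = |((α i - α i₀) * q - l i) - ((α j - α i₀) * q - l j)| := by ring_nf
    _ ≤ |(α i - α i₀) * q - l i| + |(α j - α i₀) * q - l j| := abs_sub _ _
    _ < 1 / (2 * N : ℕ) + 1 / (2 * N : ℕ) := add_lt_add (happrox i) (happrox j)
    _ = 1 / N := by push_cast; field_simp; norm_num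

end SimultaneousApproximation

theorem diff_approx_dirichlet
    (d : ℕ) (hd : 2 ≤ d) (α : Fin d → ℝ) (hα : Function.Injective α)
    (N : ℕ) (hN : 0 < N) :
    ∃ (l : Fin d → ℤ) (q : ℤ), 1 ≤ q ∧ q ≤ (2 * N) ^ (d - 1) ∧
      ∀ i j, |(α i - α j) * q - (l i - l j)| < 1 / N := by
  have : Nonempty (Fin d) := Fin.pos_iff_nonempty.mp (by omega)
  simpa only [Fintype.card_fin] using diff_approx_dirichlet_general α hN
end

section
/- Let d ≥ 2 and let α_1, …, α_d be distinct real numbers, and let N be a positive integer. Then there exist integers l_1, …, l_d and an integer q with 1 ≤ q ≤ N·(2N+1)^(d−2) such that |(α_i − α_j)·q − (l_i − l_j)| < 1/N for all i, j ∈ {1, …, d}. -/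
/-!
Normalise one of the `d` numbers to be `0` and cut the torus of the remaining `d - 1` coordinates
into cubes of side `1 / (2 * N)`. Group the cubes into disjoint pairs, the two cubes of a pair
touching at a vertex along the main diagonal. There are `N * (2 * N) ^ (d - 2)` pairs, so two
multiples of the point given by these numbers fall into the same pair. Every coordinate of their
difference is then less than `1 / N` in absolute value. As one cube is the translate of the other
by the same amount in all coordinates, any two coordinates also differ by less than `1 / N`.
-/

variable {ι : Type*} {k N : ℕ}

theorem exists_lt_le_card_map_eq {γ : Type*} [Fintype γ] (f : ℕ → γ) :
    ∃ a b, a < b ∧ b ≤ Fintype.card γ ∧ f a = f b := by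
  obtain ⟨a, b, hab, hf⟩ := Fintype.exists_ne_map_eq_of_card_lt
    (fun a : Fin (Fintype.card γ + 1) ↦ f a) (by simp)
  rcases hab.lt_or_gt with h | h
  · exact ⟨a, b, h, b.is_le, hf⟩
  · exact ⟨b, a, h, a.is_le, hf.symm⟩

theorem exists_abs_lt_sub_modEq_of_ediv_modEq {a b : ℤ} (hk : 0 < k)
    (h : a / k ≡ b / k [ZMOD N]) :
    ∃ δ : ℤ, |δ| < k ∧ a - b ≡ δ [ZMOD (k * N : ℕ)] := by
  have hk' : (0 : ℤ) < k := mod_cast hk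
  refine ⟨a % k - b % k, ?_, ?_⟩
  · exact abs_sub_lt_of_nonneg_of_lt (Int.emod_nonneg a hk'.ne') (Int.emod_lt_of_pos a hk')
      (Int.emod_nonneg b hk'.ne') (Int.emod_lt_of_pos b hk')
  · have hquot : k * (a / k) ≡ k * (b / k) [ZMOD (k * N : ℕ)] := by
      push_cast
      exact h.mul_left'
    calc a - b = k * (a / k) - k * (b / k) + (a % k - b % k) := by
          linear_combination -Int.mul_ediv_add_emod a k + Int.mul_ediv_add_emod b k
      _ ≡ k * (b / k) - k * (b / k) + (a % k - b % k) [ZMOD (k * N : ℕ)] :=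
          (hquot.sub_right _).add_right _
      _ = a % k - b % k := by ring

/-- The diagonal block of `v` in the torus of side `k * N`: a union of `k` unit cubes, consecutive
ones touching at a vertex along the main diagonal, one of which has lower corner `v`. The
differences `v i - v i₀` encode the diagonal line through `v`, and `v i₀ / k` the segment of that
line. -/
def diagonalBlock (k N : ℕ) (i₀ : ι) (v : ι → ℤ) : ZMod N × ({i // i ≠ i₀} → ZMod (k * N)) :=
  ((v i₀ / k : ℤ), fun i ↦ (v i - v i₀ : ℤ))

theorem exists_forall_sub_modEq_of_diagonalBlock_eq {i₀ : ι} {v w : ι → ℤ} (hk : 0 < k)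
    (h : diagonalBlock k N i₀ v = diagonalBlock k N i₀ w) :
    ∃ δ : ℤ, |δ| < k ∧ ∀ i, v i - w i ≡ δ [ZMOD (k * N : ℕ)] := by
  obtain ⟨hquot, hdiff⟩ := Prod.ext_iff.1 h
  obtain ⟨δ, hδ, hi₀⟩ :=
    exists_abs_lt_sub_modEq_of_ediv_modEq hk ((ZMod.intCast_eq_intCast_iff _ _ _).1 hquot)
  refine ⟨δ, hδ, fun i ↦ ?_⟩
  by_cases hi : i = i₀
  · exact hi ▸ hi₀
  · have hdiff_i : v i - v i₀ ≡ w i - w i₀ [ZMOD (k * N : ℕ)] :=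
      (ZMod.intCast_eq_intCast_iff _ _ _).1 (congrFun hdiff ⟨i, hi⟩)
    calc v i - w i = v i - v i₀ - (w i - w i₀) + (v i₀ - w i₀) := by ring
      _ ≡ w i - w i₀ - (w i - w i₀) + δ [ZMOD (k * N : ℕ)] := (hdiff_i.sub_right _).add hi₀
      _ = δ := by ring

theorem exists_lt_forall_sub_modEq [Fintype ι] [Nonempty ι] (hk : 0 < k) (hN : 0 < N)
    (v : ℕ → ι → ℤ) :
    ∃ a b : ℕ, a < b ∧ b ≤ N * (k * N) ^ (Fintype.card ι - 1) ∧
      ∃ δ : ℤ, |δ| < k ∧ ∀ i, v b i - v a i ≡ δ [ZMOD (k * N : ℕ)] := by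
  classical
  have : NeZero k := ⟨hk.ne'⟩
  have : NeZero N := ⟨hN.ne'⟩
  obtain ⟨i₀⟩ := ‹Nonempty ι›
  obtain ⟨a, b, hab, hb, hblock⟩ := exists_lt_le_card_map_eq fun q ↦ diagonalBlock k N i₀ (v q)
  refine ⟨a, b, hab, ?_, exists_forall_sub_modEq_of_diagonalBlock_eq hk hblock.symm⟩
  simpa [ZMod.card] using hb

theorem abs_sub_sub_floor_sub_floor_lt_one {R : Type*} [Ring R] [LinearOrder R]
    [IsStrictOrderedRing R] [FloorRing R] (x y : R) :
    |(x - y) - ((⌊x⌋ : R) - ⌊y⌋)| < 1 := by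
  rw [sub_sub_sub_comm, Int.self_sub_floor, Int.self_sub_floor]
  exact abs_sub_lt_of_nonneg_of_lt (Int.fract_nonneg x) (Int.fract_lt_one x)
    (Int.fract_nonneg y) (Int.fract_lt_one y)

theorem exists_approx_near_common_shift [Fintype ι] [Nonempty ι] (hk : 0 < k) (hN : 0 < N)
    (β : ι → ℝ) :
    ∃ (l : ι → ℤ) (q δ : ℤ), 1 ≤ q ∧ q ≤ N * (k * N) ^ (Fintype.card ι - 1) ∧ |δ| < k ∧
      ∀ i, |k * N * (β i * q - l i) - δ| < 1 := by
  obtain ⟨a, b, hab, hb, δ, hδ, hmod⟩ :=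
    exists_lt_forall_sub_modEq hk hN fun q i ↦ ⌊k * N * (β i * q)⌋
  choose l hl using fun i ↦ (hmod i).symm.dvd
  refine ⟨l, b - a, δ, by lia, ?_, hδ, fun i ↦ ?_⟩
  · have : (b : ℤ) ≤ N * (k * N) ^ (Fintype.card ι - 1) := mod_cast hb
    lia
  · have hli : (⌊k * N * (β i * b)⌋ - ⌊k * N * (β i * a)⌋ : ℝ) - δ = k * N * l i :=
      mod_cast hl i
    have herror : k * N * (β i * (b - a : ℤ) - l i) - δ =
        k * N * (β i * b) - k * N * (β i * a) -
          (⌊k * N * (β i * b)⌋ - ⌊k * N * (β i * a)⌋ : ℝ) := by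
      push_cast
      linear_combination hli
    rw [herror]
    exact abs_sub_sub_floor_sub_floor_lt_one _ _

/-- The case `k = 1` is Dirichlet's theorem on simultaneous approximation; a larger `k` makes
the errors agree more closely with one another. -/
theorem exists_approx_and_error_sub_lt [Fintype ι] [Nonempty ι] (hk : 0 < k) (hN : 0 < N)
    (β : ι → ℝ) :
    ∃ (l : ι → ℤ) (q : ℤ), 1 ≤ q ∧ q ≤ N * (k * N) ^ (Fintype.card ι - 1) ∧
      (∀ i, |β i * q - l i| < 1 / N) ∧
      ∀ i j, |(β i * q - l i) - (β j * q - l j)| < 2 / (k * N) := by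
  obtain ⟨l, q, δ, hq, hqN, hδ, hl⟩ := exists_approx_near_common_shift hk hN β
  have hk' : (0 : ℝ) < k := mod_cast hk
  have hkN : (0 : ℝ) < k * N := mod_cast Nat.mul_pos hk hN
  have hδ' : |(δ : ℝ)| ≤ k - 1 := by
    have : |δ| ≤ k - 1 := by lia
    exact mod_cast this
  refine ⟨l, q, hq, hqN, fun i ↦ ?_, fun i j ↦ ?_⟩
  · have hscaled : k * N * |β i * q - l i| < k :=
      calc k * N * |β i * q - l i| = |k * N * (β i * q - l i)| := by rw [abs_mul, abs_of_pos hkN]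
        _ ≤ |k * N * (β i * q - l i) - δ| + |(δ : ℝ)| := by
            simpa using abs_add_le (k * N * (β i * q - l i) - δ) (δ : ℝ)
        _ < k := by linarith [hl i]
    rwa [← mul_div_mul_left 1 (N : ℝ) hk'.ne', mul_one, lt_div_iff₀' hkN]
  · have hscaled : k * N * |(β i * q - l i) - (β j * q - l j)| < 2 :=
      calc k * N * |(β i * q - l i) - (β j * q - l j)|
          = |(k * N * (β i * q - l i) - δ) - (k * N * (β j * q - l j) - δ)| := by
            rw [sub_sub_sub_cancel_right, ← mul_sub, abs_mul, abs_of_pos hkN]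
        _ ≤ |k * N * (β i * q - l i) - δ| + |k * N * (β j * q - l j) - δ| := abs_sub _ _
        _ < 2 := by linarith [hl i, hl j]
    rwa [lt_div_iff₀' hkN]

theorem diff_approx_two_cubes_general [Fintype ι] [Nontrivial ι] (hN : 0 < N) (α : ι → ℝ) :
    ∃ (l : ι → ℤ) (q : ℤ), 1 ≤ q ∧ q ≤ N * (2 * N) ^ (Fintype.card ι - 2) ∧
      ∀ i j, |(α i - α j) * q - (l i - l j)| < 1 / N := by
  classical
  obtain ⟨i₀, i₁, hne⟩ := exists_pair_ne ι
  have : Nonempty {i // i ≠ i₀} := ⟨i₁, hne.symm⟩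
  obtain ⟨l, q, hq, hqN, hsmall, hclose⟩ :=
    exists_approx_and_error_sub_lt two_pos hN fun i : {i // i ≠ i₀} ↦ α i - α i₀
  have hcard : Fintype.card {i // i ≠ i₀} - 1 = Fintype.card ι - 2 := by
    simp [Nat.sub_sub]
  let L (i : ι) : ℤ := if h : i ≠ i₀ then l ⟨i, h⟩ else 0
  let err (i : ι) : ℝ := (α i - α i₀) * q - L i
  have err_base : err i₀ = 0 := by simp [err, L]
  have err_of_ne (i : ι) (h : i ≠ i₀) : err i = (α i - α i₀) * q - l ⟨i, h⟩ := by
    simp [err, L, h]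
  refine ⟨L, q, hq, mod_cast hcard ▸ hqN, fun i j ↦ ?_⟩
  calc |(α i - α j) * q - (L i - L j)| = |err i - err j| := by congr 1; ring
    _ < 1 / N := ?_
  by_cases hi : i = i₀ <;> by_cases hj : j = i₀
  · simpa [hi, hj] using hN
  · simpa only [hi, err_base, zero_sub, abs_neg, err_of_ne j hj] using hsmall ⟨j, hj⟩
  · simpa only [hj, err_base, sub_zero, err_of_ne i hi] using hsmall ⟨i, hi⟩
  · rw [err_of_ne i hi, err_of_ne j hj, ← mul_div_mul_left 1 (N : ℝ) two_ne_zero, mul_one]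
    exact hclose ⟨i, hi⟩ ⟨j, hj⟩

theorem diff_approx_two_cubes
    (d : ℕ) (hd : 2 ≤ d) (α : Fin d → ℝ) (hα : Function.Injective α)
    (N : ℕ) (hN : 0 < N) :
    ∃ (l : Fin d → ℤ) (q : ℤ), 1 ≤ q ∧ q ≤ N * (2 * N + 1) ^ (d - 2) ∧
      ∀ i j, |(α i - α j) * q - (l i - l j)| < 1 / N := by
  have : Nontrivial (Fin d) := Fin.nontrivial_iff_two_le.2 hd
  obtain ⟨l, q, hq, hqN, hl⟩ := diff_approx_two_cubes_general hN α
  exact ⟨l, q, hq, hqN.trans (by rw [Fintype.card_fin]; gcongr; lia), hl⟩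
end

section
/- Let d ≥ 2 and let α_1, …, α_d be distinct real numbers, and let N be a positive integer. Then there exist integers l_1, …, l_d and an integer q with 1 ≤ q and d·q ≤ (2N+2)^(d−1) such that |(α_i − α_j)·q − (l_i − l_j)| < 1/N for all i, j ∈ {1, …, d}. -/
/-!
On the torus `(ℝ/ℤ)^d`, consider the set of points all of whose coordinates lie on an arc of
length `c = 1 / (2N)`. Up to a null set, sorting its points by the coordinate at which the arc
starts decomposes it into `d` disjoint pieces, each of measure `c ^ (d - 1)`. By quantitative
Poincaré recurrence for the translation by `α`, if `n * d * c ^ (d - 1) > 1`, then some `x` and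
`x + q α` with `0 < q < n` both lie in the union of the pieces; the least such `n` gives
`q ≤ (2N) ^ (d - 1) / d`. Modulo `ℤ^d` and the diagonal, `q α` is then a difference of two vectors
with coordinates in `[0, c)`, so the differences of its coordinates are at distance less than
`2 c = 1 / N` from differences of integers.
-/

open MeasureTheory Set

theorem isOpen_addCircle_coe_image_Ioo (p a b : ℝ) :
    IsOpen (((↑) : ℝ → AddCircle p) '' Ioo a b) :=
  QuotientAddGroup.isOpenMap_coe _ isOpen_Ioo

theorem volume_addCircle_coe_image_Ioo {p a b : ℝ} [Fact (0 < p)] (hb : b ≤ a + p) :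
    volume (((↑) : ℝ → AddCircle p) '' Ioo a b) = ENNReal.ofReal (b - a) := by
  have h_subset : Ioo a b ⊆ Ioc a (a + p) := fun x hx => ⟨hx.1, hx.2.le.trans hb⟩
  have h_inj : InjOn ((↑) : ℝ → AddCircle p) (Ioc a (a + p)) :=
    injOn_iff_injective.2 (AddCircle.equivIoc p a).symm.injective
  rw [AddCircle.add_projection_respects_measure p a
    (isOpen_addCircle_coe_image_Ioo p a b).measurableSet, h_inj.preimage_image_inter h_subset,
    Real.volume_Ioo]

instance isProbabilityMeasure_unitAddCircle :
    IsProbabilityMeasure (volume : Measure UnitAddCircle) :=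
  ⟨UnitAddCircle.measure_univ⟩

section SubCoord

variable {ι A : Type*} [AddCommGroup A]

/-- The coordinates of a vector relative to its `j`-th one; the `j`-th difference, always zero, is
omitted to make the map surjective. -/
def subCoord (j : ι) : (ι → A) →+ ({i // i ≠ j} → A) where
  toFun x i := x i - x j
  map_zero' := by ext; simp
  map_add' x y := by ext; simp [add_sub_add_comm]

theorem subCoord_apply (j : ι) (x : ι → A) (i : {i // i ≠ j}) : subCoord j x i = x i - x j := rfl

theorem subCoord_surjective (j : ι) :
    Function.Surjective (subCoord j : (ι → A) → {i // i ≠ j} → A) := by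
  classical
  refine fun y => ⟨fun i => if h : i ≠ j then y ⟨i, h⟩ else 0, funext fun ⟨i, hi⟩ => ?_⟩
  simp [subCoord_apply, hi]

theorem continuous_subCoord [TopologicalSpace A] [ContinuousSub A] (j : ι) :
    Continuous (subCoord j : (ι → A) → {i // i ≠ j} → A) :=
  continuous_pi fun i => (continuous_apply i.1).sub (continuous_apply j)

theorem measurePreserving_subCoord [Fintype ι] [DecidableEq ι] [TopologicalSpace A]
    [IsTopologicalAddGroup A] [CompactSpace A] [SecondCountableTopology A] [MeasurableSpace A]
    [BorelSpace A] (μ : Measure A) [μ.IsAddHaarMeasure] [IsProbabilityMeasure μ] (j : ι) :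
    MeasurePreserving (subCoord j) (Measure.pi fun _ => μ) (Measure.pi fun _ => μ) :=
  AddMonoidHom.measurePreserving (continuous_subCoord j) (subCoord_surjective j) (by simp)

end SubCoord

/-- The points of the torus whose coordinates lie on an arc of length `c` starting at the `j`-th
coordinate. The other coordinates must avoid the starting point, which makes the sets for different
`j` disjoint when `c ≤ 1 / 2`. -/
def arcCluster {ι : Type*} (c : ℝ) (j : ι) : Set (ι → UnitAddCircle) :=
  subCoord j ⁻¹' univ.pi fun _ => ((↑) : ℝ → UnitAddCircle) '' Ioo 0 c

namespace arcCluster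

variable {ι : Type*} {c : ℝ}

theorem sub_mem_coe_image_Ioo {j i : ι} {x : ι → UnitAddCircle} (hx : x ∈ arcCluster c j)
    (hij : i ≠ j) : x i - x j ∈ ((↑) : ℝ → UnitAddCircle) '' Ioo 0 c :=
  hx ⟨i, hij⟩ (mem_univ _)

theorem sub_mem_coe_image_Ico (hc : 0 < c) {j : ι} {x : ι → UnitAddCircle}
    (hx : x ∈ arcCluster c j) (i : ι) :
    x i - x j ∈ ((↑) : ℝ → UnitAddCircle) '' Ico 0 c := by
  obtain rfl | hij := eq_or_ne i j
  · exact ⟨0, left_mem_Ico.2 hc, by simp⟩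
  · exact image_mono Ioo_subset_Ico_self (sub_mem_coe_image_Ioo hx hij)

theorem pairwise_disjoint (hc : c ≤ 1 / 2) :
    Pairwise (Function.onFun Disjoint (arcCluster c : ι → Set (ι → UnitAddCircle))) := by
  refine fun j k hjk => disjoint_left.2 fun x hxj hxk => ?_
  obtain ⟨r, ⟨hr₀, hrc⟩, hr⟩ := sub_mem_coe_image_Ioo hxj hjk.symm
  obtain ⟨s, ⟨hs₀, hsc⟩, hs⟩ := sub_mem_coe_image_Ioo hxk hjk
  have h_sum : ((r + s : ℝ) : UnitAddCircle) = 0 := by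
    rw [AddCircle.coe_add, hr, hs, sub_add_sub_cancel, sub_self]
  have h_mem : r + s ∈ Ico (0 : ℝ) 1 := ⟨by linarith, by linarith⟩
  linarith [(AddCircle.coe_eq_zero_iff_of_mem_Ico h_mem).1 h_sum]

/-- Modulo integers, `x` is `r` plus a diagonal vector and `β + x` is `s` plus a diagonal vector,
with all `r i, s i ∈ [0, c)`; hence `β + r - s` is diagonal modulo integers. -/
theorem exists_int_abs_sub_sub_lt (hc : 0 < c) {j k : ι} {x : ι → UnitAddCircle} {β : ι → ℝ}
    (hx : x ∈ arcCluster c j) (hy : (fun i => (β i : UnitAddCircle)) + x ∈ arcCluster c k) :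
    ∃ l : ι → ℤ, ∀ i i', |(β i - β i') - (l i - l i')| < 2 * c := by
  choose r hr hxr using sub_mem_coe_image_Ico hc hx
  choose s hs hys using sub_mem_coe_image_Ico hc hy
  obtain ⟨u, hu⟩ : ∃ u : ℝ, (u : UnitAddCircle) = β k + x k - x j :=
    QuotientAddGroup.mk_surjective _
  have h_int (i : ι) : ∃ n : ℤ, (n : ℝ) = β i + r i - s i - u := by
    have h_coe : ((β i + r i - s i - u : ℝ) : UnitAddCircle) = 0 := by
      rw [AddCircle.coe_sub, AddCircle.coe_sub, AddCircle.coe_add, hxr, hys, hu, Pi.add_apply,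
        Pi.add_apply]
      abel
    simpa using (AddCircle.coe_eq_zero_iff 1).1 h_coe
  choose l hl using h_int
  refine ⟨l, fun i i' => ?_⟩
  rw [hl, hl, abs_lt]
  obtain ⟨_, _⟩ := hr i
  obtain ⟨_, _⟩ := hr i'
  obtain ⟨_, _⟩ := hs i
  obtain ⟨_, _⟩ := hs i'
  constructor <;> linarith

theorem isOpen [Finite ι] (j : ι) : IsOpen (arcCluster c j) :=
  (isOpen_set_pi finite_univ fun _ _ => isOpen_addCircle_coe_image_Ioo _ _ _).preimage
    (continuous_subCoord j)

variable [Fintype ι]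

theorem volume_eq (hc : c ≤ 1) (j : ι) :
    volume (arcCluster c j) = ENNReal.ofReal c ^ (Fintype.card ι - 1) := by
  classical
  have h_arc : volume (((↑) : ℝ → UnitAddCircle) '' Ioo 0 c) = ENNReal.ofReal c := by
    rw [volume_addCircle_coe_image_Ioo (by rwa [zero_add]), sub_zero]
  have h_box : MeasurableSet
      (univ.pi fun _ : {i // i ≠ j} => ((↑) : ℝ → UnitAddCircle) '' Ioo 0 c) :=
    .univ_pi fun _ => (isOpen_addCircle_coe_image_Ioo _ _ _).measurableSet
  rw [arcCluster, volume_pi,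
    (measurePreserving_subCoord volume j).measure_preimage h_box.nullMeasurableSet, Measure.pi_pi]
  simp [h_arc]

theorem volume_iUnion (hc₀ : 0 ≤ c) (hc : c ≤ 1 / 2) :
    volume (⋃ j : ι, arcCluster c j) =
      ENNReal.ofReal (Fintype.card ι * c ^ (Fintype.card ι - 1)) := by
  rw [measure_iUnion (pairwise_disjoint hc) fun j => (isOpen j).measurableSet, tsum_fintype]
  simp [volume_eq (hc.trans one_half_lt_one.le), ENNReal.ofReal_mul, ENNReal.ofReal_pow hc₀]

end arcCluster

theorem exists_nat_forall_abs_sub_mul_sub_lt {ι : Type*} [Fintype ι] (α : ι → ℝ) {c : ℝ}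
    (hc₀ : 0 < c) (hc : c ≤ 1 / 2) {n : ℕ}
    (hn : 1 < n * (Fintype.card ι * c ^ (Fintype.card ι - 1))) :
    ∃ q ∈ Ioo 0 n, ∃ l : ι → ℤ, ∀ i j, |(α i - α j) * q - (l i - l j)| < 2 * c := by
  have h_vol : volume (univ : Set (ι → UnitAddCircle)) < n * volume (⋃ j : ι, arcCluster c j) := by
    rw [arcCluster.volume_iUnion hc₀.le hc, ← ENNReal.ofReal_natCast,
      ← ENNReal.ofReal_mul n.cast_nonneg]
    simpa only [measure_univ, ENNReal.one_lt_ofReal] using hn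
  obtain ⟨x, hx, q, hq, hqx⟩ :=
    (measurePreserving_add_left volume (fun i => (α i : UnitAddCircle)))
      |>.exists_mem_iterate_mem_of_measure_univ_lt_mul_measure
        (isOpen_iUnion arcCluster.isOpen).nullMeasurableSet h_vol
  obtain ⟨j, hxj⟩ := mem_iUnion.1 hx
  obtain ⟨k, hqk⟩ := mem_iUnion.1 hqx
  have h_translate : (fun i => ((α i * q : ℝ) : UnitAddCircle)) + x ∈ arcCluster c k := by
    have h_smul : (fun i => ((α i * q : ℝ) : UnitAddCircle)) = q • fun i => (α i : UnitAddCircle) :=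
      funext fun i => by rw [mul_comm, ← nsmul_eq_mul, AddCircle.coe_nsmul, Pi.smul_apply]
    rwa [add_left_iterate, ← h_smul] at hqk
  obtain ⟨l, hl⟩ := arcCluster.exists_int_abs_sub_sub_lt hc₀ hxj h_translate
  exact ⟨q, hq, l, by simpa only [sub_mul] using hl⟩

theorem diff_approx_polytope_general {ι : Type*} [Fintype ι] [Nonempty ι] (α : ι → ℝ) {T : ℝ}
    (hT : 1 ≤ T) :
    ∃ (l : ι → ℤ) (q : ℤ), 1 ≤ q ∧ Fintype.card ι * q ≤ (2 * T) ^ (Fintype.card ι - 1) ∧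
      ∀ i j, |(α i - α j) * q - (l i - l j)| < 1 / T := by
  set B : ℝ := (2 * T) ^ (Fintype.card ι - 1)
  have h_card : (0 : ℝ) < Fintype.card ι := by exact_mod_cast Fintype.card_pos
  have h_count : 1 < (⌊B / Fintype.card ι⌋₊ + 1 : ℕ) *
      (Fintype.card ι * (1 / (2 * T)) ^ (Fintype.card ι - 1)) := by
    have h_floor := (div_lt_iff₀ h_card).1 (Nat.lt_floor_add_one (B / Fintype.card ι))
    rwa [one_div_pow, ← mul_assoc, mul_one_div, one_lt_div (by positivity), Nat.cast_add_one]
  obtain ⟨q, ⟨hq₀, hq⟩, l, hl⟩ :=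
    exists_nat_forall_abs_sub_mul_sub_lt α (by positivity) (by gcongr; linarith) h_count
  have hqB : (q : ℝ) ≤ B / Fintype.card ι :=
    (Nat.le_floor_iff (by positivity)).1 (Nat.lt_succ_iff.1 hq)
  refine ⟨l, q, by exact_mod_cast hq₀, ?_, ?_⟩
  · simpa [mul_comm] using (le_div_iff₀ h_card).1 hqB
  · rwa [show 2 * (1 / (2 * T)) = 1 / T by field_simp] at hl

theorem diff_approx_polytope
    (d : ℕ) (hd : 2 ≤ d) (α : Fin d → ℝ) (hα : Function.Injective α)
    (N : ℕ) (hN : 0 < N) :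
    ∃ (l : Fin d → ℤ) (q : ℤ), 1 ≤ q ∧ (d : ℤ) * q ≤ (2 * N + 2) ^ (d - 1) ∧
      ∀ i j, |(α i - α j) * q - (l i - l j)| < 1 / N := by
  have : NeZero d := ⟨by omega⟩
  obtain ⟨l, q, hq, hle, h⟩ := diff_approx_polytope_general α (Nat.one_le_cast.2 hN)
  refine ⟨l, q, hq, ?_, h⟩
  rw [Fintype.card_fin] at hle
  have h_bound : (d : ℝ) * q ≤ (2 * N + 2) ^ (d - 1) :=
    hle.trans (pow_le_pow_left₀ (by positivity) (le_add_of_nonneg_right zero_le_two) _)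
  exact_mod_cast h_bound
end

section
/- Let d ≥ 3, let α_1, …, α_d be distinct real numbers, let N be a positive integer, and suppose that for some indices n ≠ m the difference α_n − α_m is an integer. Then: (a) there exist integers l_1, …, l_d and an integer q with 1 ≤ q ≤ N·(2N+1)^(d−3) such that |(α_i − α_j)·q − (l_i − l_j)| < 1/N for all i, j; and (b) there exist integers l′_1, …, l′_d and an integer q′ with 1 ≤ q′ and (d−1)·q′ ≤ (2N+2)^(d−2) such that |(α_i − α_j)·q′ − (l′_i − l′_j)| < 1/N for all i, j. -/
/-! Say that `u, v : ι → ℤ` are equivalent if `u - v` is constant modulo `M`; there are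
`M ^ (#ι - 1)` classes. For `x : ι → ℝ` with no two coordinates congruent modulo `1`, the `#ι`
vectors `i ↦ ⌊x i - x j⌋`, one for each `j`, lie in distinct classes. Taking for `x` generic
translates of `M * q * α` with `0 ≤ q ≤ Q` gives `(Q + 1) * #ι` pairs `(q, j)`, so if this number
exceeds `M ^ (#ι - 1)`, two pairs share a class. They belong to distinct `q`, and the difference of
these two `q` is the denominator: rounding costs less than `2` in each difference, hence `2 / M`
after division by `M`.

An index whose value agrees with another one modulo `1` can be left out, which replaces `#ι` by
`#ι - 1`. -/

lemma exists_ne_dvd_sub_sub_sub {ι σ : Type*} [Fintype ι] [Fintype σ] {M : ℕ} [NeZero M]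
    (u : σ → ι → ℤ) (hσ : M ^ (Fintype.card ι - 1) < Fintype.card σ) :
    ∃ a b, a ≠ b ∧ ∀ i j, (M : ℤ) ∣ (u a i - u a j) - (u b i - u b j) := by
  classical
  rcases isEmpty_or_nonempty ι with _ | ⟨⟨o⟩⟩
  · obtain ⟨a, b, hab⟩ := Fintype.exists_pair_of_one_lt_card (by simpa using hσ)
    exact ⟨a, b, hab, isEmptyElim⟩
  let residues : σ → {i // i ≠ o} → ZMod M := fun a i => (u a i - u a o : ℤ)
  obtain ⟨a, b, hab, hres⟩ := Fintype.exists_ne_map_eq_of_card_lt residues (by simpa using hσ)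
  have dvd_base (i : ι) : (M : ℤ) ∣ (u a i - u a o) - (u b i - u b o) := by
    by_cases hi : i = o
    · simp [hi]
    · exact (ZMod.intCast_eq_intCast_iff_dvd_sub _ _ M).1 (congrFun hres ⟨i, hi⟩).symm
  refine ⟨a, b, hab, fun i j => ?_⟩
  have hdiff := dvd_sub (dvd_base i) (dvd_base j)
  rwa [sub_sub_sub_comm, sub_sub_sub_cancel_right, sub_sub_sub_cancel_right] at hdiff

section Floor

variable {R : Type*} [CommRing R] [LinearOrder R] [IsStrictOrderedRing R] [FloorRing R]

lemma floor_add_floor_neg_of_notMem_range_intCast {a : R} (ha : a ∉ Set.range Int.cast) :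
    ⌊a⌋ + ⌊-a⌋ = -1 := by
  rw [Int.floor_neg, (Int.ceil_eq_floor_add_one_iff_notMem a).2 ha]
  ring

lemma abs_sub_sub_floor_sub_sub_lt_two (a b c d : R) :
    |((a - b) - (c - d)) - ((⌊a⌋ - ⌊b⌋) - (⌊c⌋ - ⌊d⌋) : ℤ)| < 2 := by
  push_cast
  rw [abs_lt]
  constructor <;>
    linarith [Int.floor_le a, Int.floor_le b, Int.floor_le c, Int.floor_le d,
      Int.lt_floor_add_one a, Int.lt_floor_add_one b, Int.lt_floor_add_one c,
      Int.lt_floor_add_one d]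

lemma exists_lt_dvd_floor_sub {ι : Type*} [Fintype ι] {M : ℕ} (hM : 2 ≤ M) {Q : ℕ} {x : ℕ → ι → R}
    (hx : ∀ q i j, i ≠ j → x q i - x q j ∉ Set.range Int.cast)
    (hQ : M ^ (Fintype.card ι - 1) < (Q + 1) * Fintype.card ι) :
    ∃ p q, p < q ∧ q ≤ Q ∧ ∃ j k, ∀ i i', (M : ℤ) ∣
      (⌊x q i - x q j⌋ - ⌊x q i' - x q j⌋) - (⌊x p i - x p k⌋ - ⌊x p i' - x p k⌋) := by
  have : NeZero M := ⟨by omega⟩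
  obtain ⟨⟨p, k⟩, ⟨q, j⟩, hne, hdvd⟩ := exists_ne_dvd_sub_sub_sub
    (fun (a : Fin (Q + 1) × ι) i => ⌊x a.1 i - x a.1 a.2⌋) (by simpa using hQ)
  have hpq : p ≠ q := by
    rintro rfl
    have hkj : k ≠ j := fun h => hne (by rw [h])
    have hfloor := floor_add_floor_neg_of_notMem_range_intCast (hx p j k hkj.symm)
    -- At `(k, j)` two floors are `⌊0⌋`, the others `⌊a⌋` and `⌊-a⌋` with `a = x p j - x p k`.
    have hM1 : (M : ℤ) ∣ 1 := by
      convert hdvd k j using 1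
      rw [neg_sub] at hfloor
      simp only [sub_self, Int.floor_zero]
      linarith
    have := Int.le_of_dvd one_pos hM1
    omega
  rcases hpq.lt_or_gt with h | h
  · exact ⟨p, q, h, by omega, j, k, fun i i' => by
      simpa only [neg_sub] using (dvd_neg.2 (hdvd i i'))⟩
  · exact ⟨q, p, h, by omega, k, j, hdvd⟩

end Floor

lemma exists_shift_sub_notMem_range_intCast {ι κ : Type*} [Countable ι] [Countable κ]
    (c : κ → ι → ℝ) :
    ∃ w : ι → ℝ, ∀ q i j, i ≠ j → (c q i + w i) - (c q j + w j) ∉ Set.range Int.cast := by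
  obtain ⟨e, he⟩ := Countable.exists_injective_nat ι
  let excluded : κ × ι × ι × ℤ → ℝ := fun ⟨q, i, j, z⟩ => (z - (c q i - c q j)) / (e i - e j)
  obtain ⟨s, hs⟩ : (Set.range excluded)ᶜ.Nonempty :=
    ((Set.countable_range excluded).dense_compl ℝ).nonempty
  refine ⟨fun i => s * e i, fun q i j hij ⟨z, hz⟩ => hs ⟨(q, i, j, z), ?_⟩⟩
  have hne : (e i - e j : ℝ) ≠ 0 := sub_ne_zero.2 (Nat.cast_injective.ne (he.ne hij))
  rw [div_eq_iff hne, hz]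
  ring

lemma exists_diff_approx {ι : Type*} [Fintype ι] (α : ι → ℝ) {M : ℕ} (hM : 2 ≤ M) :
    ∃ (l : ι → ℤ) (q : ℤ), 1 ≤ q ∧ Fintype.card ι * q ≤ M ^ (Fintype.card ι - 1) ∧
      ∀ i j, |(α i - α j) * q - (l i - l j)| < 2 / M := by
  rcases isEmpty_or_nonempty ι with _ | ⟨⟨o⟩⟩
  · exact ⟨isEmptyElim, 1, le_rfl, by simp, isEmptyElim⟩
  obtain ⟨w, hw⟩ := exists_shift_sub_notMem_range_intCast fun (q : ℕ) i => M * q * α i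
  let x : ℕ → ι → ℝ := fun q i => M * q * α i + w i
  let Q := M ^ (Fintype.card ι - 1) / Fintype.card ι
  have hQ : M ^ (Fintype.card ι - 1) < (Q + 1) * Fintype.card ι := by
    rw [mul_comm]
    exact Nat.lt_mul_div_succ _ (Fintype.card_pos_iff.2 ⟨o⟩)
  obtain ⟨p, q, hpq, hqQ, j, k, hdvd⟩ := exists_lt_dvd_floor_sub hM (x := x) hw hQ
  choose l hl using fun i => hdvd i o
  refine ⟨l, q - p, by omega, ?_, fun i i' => ?_⟩
  · calc (Fintype.card ι * (q - p) : ℤ) ≤ Fintype.card ι * Q := by gcongr; omega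
      _ ≤ M ^ (Fintype.card ι - 1) := by exact_mod_cast Nat.mul_div_le _ _
  · have hM0 : (0 : ℝ) < M := by positivity
    have hfloor : (⌊x q i - x q j⌋ - ⌊x q i' - x q j⌋) - (⌊x p i - x p k⌋ - ⌊x p i' - x p k⌋) =
        M * (l i - l i') := by
      linear_combination hl i - hl i'
    have hround := abs_sub_sub_floor_sub_sub_lt_two
      (x q i - x q j) (x q i' - x q j) (x p i - x p k) (x p i' - x p k)
    rw [hfloor] at hround
    rw [lt_div_iff₀ hM0, ← abs_of_pos hM0, ← abs_mul]
    convert hround using 2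
    push_cast [x]
    ring

lemma exists_diff_approx_of_sub_eq_intCast {ι κ R : Type*} [CommRing R] [LinearOrder R]
    {α : ι → R} {β : κ → R} (h : ∀ i, ∃ (j : κ) (z : ℤ), α i - β j = z) {ε : R}
    {l : κ → ℤ} {q : ℤ} (hl : ∀ i j, |(β i - β j) * q - (l i - l j)| < ε) :
    ∃ l' : ι → ℤ, ∀ i j, |(α i - α j) * q - (l' i - l' j)| < ε := by
  choose f z hz using h
  refine ⟨fun i => l (f i) + z i * q, fun i j => ?_⟩
  convert hl (f i) (f j) using 2
  push_cast
  linear_combination (q : R) * hz i - (q : R) * hz j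

lemma le_mul_pow_of_sub_one_mul_le_pow {d N : ℕ} (hd : 3 ≤ d) {q : ℤ} (hq : 0 ≤ q)
    (h : ((d : ℤ) - 1) * q ≤ (2 * N) ^ (d - 2)) : q ≤ N * (2 * N + 1) ^ (d - 3) := by
  obtain ⟨k, rfl⟩ := Nat.exists_eq_add_of_le' hd
  have two_mul_q_le : 2 * q ≤ 2 * (N * (2 * N + 1) ^ k) :=
    calc 2 * q ≤ (((k + 3 : ℕ) : ℤ) - 1) * q := by gcongr; push_cast; omega
      _ ≤ (2 * N) ^ (k + 1) := h
      _ = 2 * (N * (2 * N) ^ k) := by ring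
      _ ≤ 2 * (N * (2 * N + 1) ^ k) := by gcongr; omega
  exact le_of_mul_le_mul_left two_mul_q_le two_pos

theorem diff_approx_integer_difference_general {ι : Type*} [Fintype ι] (α : ι → ℝ) {N : ℕ}
    (hN : 0 < N) {n m : ι} (hnm : n ≠ m) (hint : ∃ z : ℤ, α n - α m = z) :
    ∃ (l : ι → ℤ) (q : ℤ), 1 ≤ q ∧
      ((Fintype.card ι : ℤ) - 1) * q ≤ (2 * N) ^ (Fintype.card ι - 2) ∧
      ∀ i j, |(α i - α j) * q - (l i - l j)| < 1 / N := by
  classical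
  obtain ⟨l, q, hq, hbound, hl⟩ :=
    exists_diff_approx (fun i : {i // i ≠ n} => α i) (M := 2 * N) (by omega)
  have hcard : Fintype.card {i // i ≠ n} = Fintype.card ι - 1 := Set.card_ne_eq n
  have hmod (i : ι) : ∃ (j : {i // i ≠ n}) (z : ℤ), α i - α j = z := by
    by_cases hi : i = n
    · exact ⟨⟨m, hnm.symm⟩, hi ▸ hint⟩
    · exact ⟨⟨i, hi⟩, 0, by simp⟩
  obtain ⟨l', hl'⟩ := exists_diff_approx_of_sub_eq_intCast hmod hl
  refine ⟨l', q, hq, ?_, fun i j => (hl' i j).trans_eq ?_⟩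
  · rw [hcard, Nat.cast_pred (Fintype.card_pos_iff.2 ⟨n⟩)] at hbound
    exact_mod_cast hbound
  · push_cast
    field_simp

theorem diff_approx_integer_difference
    (d : ℕ) (hd : 3 ≤ d) (α : Fin d → ℝ) (hα : Function.Injective α)
    (N : ℕ) (hN : 0 < N)
    (n m : Fin d) (hnm : n ≠ m) (hint : ∃ z : ℤ, α n - α m = z) :
    (∃ (l : Fin d → ℤ) (q : ℤ), 1 ≤ q ∧ q ≤ N * (2 * N + 1) ^ (d - 3) ∧
      ∀ i j, |(α i - α j) * q - (l i - l j)| < 1 / N) ∧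
    (∃ (l' : Fin d → ℤ) (q' : ℤ), 1 ≤ q' ∧ ((d : ℤ) - 1) * q' ≤ (2 * N + 2) ^ (d - 2) ∧
      ∀ i j, |(α i - α j) * q' - (l' i - l' j)| < 1 / N) := by
  obtain ⟨l, q, hq, hbound, hl⟩ := diff_approx_integer_difference_general α hN hnm hint
  rw [Fintype.card_fin] at hbound
  exact ⟨⟨l, q, hq, le_mul_pow_of_sub_one_mul_le_pow hd (by omega) hbound, hl⟩,
    ⟨l, q, hq, hbound.trans (by gcongr; omega), hl⟩⟩
end

section
/- Let n ≥ 1, let p_1, …, p_n be nonnegative reals with Σ_k p_k = 1, let α_1, …, α_n be real numbers, and let ε ≥ 0. If |α_j − α_k| ≤ 2ε for all j, k, then Σ_{j,k} p_j·p_k·(1 − cos(α_j − α_k)) ≤ ε². -/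
/-!
Regard `p` as the law of a random variable `A` with values `α k`, and let `A'` be an independent
copy. Since `1 - cos x ≤ x ^ 2 / 2`, the double sum `E[1 - cos (A - A')]` is at most
`E[(A - A') ^ 2] / 2 = Var A`. If any two values of `A` differ by at most `2 * ε`, they all lie in
an interval of length `2 * ε`, so Popoviciu's inequality gives `Var A ≤ ε ^ 2`.
-/

open MeasureTheory ProbabilityTheory

theorem exists_ae_mem_Icc_of_ae_abs_sub_le {Ω : Type*} {mΩ : MeasurableSpace Ω}
    {μ : Measure Ω} [NeZero μ] {X : Ω → ℝ} {δ : ℝ}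
    (hclose : ∀ᵐ ω ∂μ, ∀ᵐ ω' ∂μ, |X ω - X ω'| ≤ δ) :
    ∃ a, ∀ᵐ ω ∂μ, X ω ∈ Set.Icc a (a + δ) := by
  obtain ⟨ω₀, hω₀⟩ := hclose.exists
  have isBoundedUnder_ge : Filter.IsBoundedUnder (· ≥ ·) (ae μ) X :=
    Filter.isBoundedUnder_of_eventually_ge (a := X ω₀ - δ)
      (hω₀.mono fun _ h ↦ by linarith [le_of_abs_le h])
  have isBoundedUnder_le : Filter.IsBoundedUnder (· ≤ ·) (ae μ) X :=
    Filter.isBoundedUnder_of_eventually_le (a := X ω₀ + δ)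
      (hω₀.mono fun _ h ↦ by linarith [neg_le_of_abs_le h])
  refine ⟨essInf X μ, ?_⟩
  filter_upwards [ae_essInf_le isBoundedUnder_ge, hclose] with ω hinf hω
  have sub_le_essInf : X ω - δ ≤ essInf X μ :=
    le_essInf_of_ae_le _ (hω.mono fun _ h ↦ by linarith [le_of_abs_le h])
      isBoundedUnder_le.isCoboundedUnder_ge
  exact ⟨hinf, sub_le_iff_le_add.1 sub_le_essInf⟩

section RandomVariable

variable {Ω : Type*} {mΩ : MeasurableSpace Ω} {μ : Measure Ω} [IsProbabilityMeasure μ]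
  {X : Ω → ℝ}

theorem integral_prod_sub_sq_eq_two_mul_variance (hX : MemLp X 2 μ) :
    ∫ z, (X z.1 - X z.2) ^ 2 ∂μ.prod μ = 2 * Var[X; μ] := by
  have hX₁ : MemLp (fun z : Ω × Ω ↦ X z.1) 2 (μ.prod μ) := hX.comp_fst μ
  have hX₂ : MemLp (fun z : Ω × Ω ↦ X z.2) 2 (μ.prod μ) := hX.comp_snd μ
  have mean_zero : ∫ z, (X z.1 - X z.2) ∂μ.prod μ = 0 := by
    rw [integral_sub (hX₁.integrable one_le_two) (hX₂.integrable one_le_two),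
      integral_fun_fst, integral_fun_snd, sub_self]
  calc
    ∫ z, (X z.1 - X z.2) ^ 2 ∂μ.prod μ
      = Var[fun z ↦ X z.1 - X z.2; μ.prod μ] :=
        (variance_of_integral_eq_zero (hX₁.sub hX₂).aemeasurable mean_zero).symm
    _ = Var[X; μ] + Var[-X; μ] := by
        simpa only [Pi.neg_apply, ← sub_eq_add_neg] using variance_add_prod hX hX.neg
    _ = 2 * Var[X; μ] := by rw [variance_neg, two_mul]

theorem integral_prod_one_sub_cos_sub_le_variance (hX : MemLp X 2 μ) :
    ∫ z, (1 - Real.cos (X z.1 - X z.2)) ∂μ.prod μ ≤ Var[X; μ] := by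
  have integrable_sq : Integrable (fun z : Ω × Ω ↦ (X z.1 - X z.2) ^ 2) (μ.prod μ) :=
    ((hX.comp_fst μ).sub (hX.comp_snd μ)).integrable_sq
  calc
    ∫ z, (1 - Real.cos (X z.1 - X z.2)) ∂μ.prod μ
      ≤ ∫ z, (X z.1 - X z.2) ^ 2 / 2 ∂μ.prod μ :=
        integral_mono_of_nonneg (.of_forall fun _ ↦ sub_nonneg.2 (Real.cos_le_one _))
          (integrable_sq.div_const 2)
          (.of_forall fun _ ↦ sub_le_comm.1 Real.one_sub_sq_div_two_le_cos)
    _ = Var[X; μ] := by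
        rw [integral_div, integral_prod_sub_sq_eq_two_mul_variance hX,
          mul_div_cancel_left₀ _ two_ne_zero]

theorem variance_popoviciu_cos_bound_general (hX : AEMeasurable X μ) {ε : ℝ}
    (hclose : ∀ᵐ z ∂μ.prod μ, |X z.1 - X z.2| ≤ 2 * ε) :
    ∫ z, (1 - Real.cos (X z.1 - X z.2)) ∂μ.prod μ ≤ ε ^ 2 := by
  obtain ⟨a, ha⟩ := exists_ae_mem_Icc_of_ae_abs_sub_le (Measure.ae_ae_of_ae_prod hclose)
  calc
    ∫ z, (1 - Real.cos (X z.1 - X z.2)) ∂μ.prod μ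
      ≤ Var[X; μ] := integral_prod_one_sub_cos_sub_le_variance
        (memLp_of_bounded ha hX.aestronglyMeasurable 2)
    _ ≤ ((a + 2 * ε - a) / 2) ^ 2 := variance_le_sq_of_bounded ha hX
    _ = ε ^ 2 := by ring

end RandomVariable

theorem exists_pmf_toReal_eq {ι : Type*} [Fintype ι] {p : ι → ℝ} (hp : ∀ i, 0 ≤ p i)
    (hpsum : ∑ i, p i = 1) : ∃ P : PMF ι, ∀ i, (P i).toReal = p i :=
  ⟨.ofFintype (fun i ↦ ENNReal.ofReal (p i)) (by
    rw [← ENNReal.ofReal_sum_of_nonneg fun i _ ↦ hp i, hpsum, ENNReal.ofReal_one]),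
    fun i ↦ ENNReal.toReal_ofReal (hp i)⟩

theorem integral_prod_pmf_eq_sum_sum {ι κ E : Type*} [Fintype ι] [MeasurableSpace ι]
    [MeasurableSingletonClass ι] [Fintype κ] [MeasurableSpace κ] [MeasurableSingletonClass κ]
    [NormedAddCommGroup E] [NormedSpace ℝ E] [CompleteSpace E]
    (P : PMF ι) (Q : PMF κ) (f : ι × κ → E) :
    ∫ z, f z ∂P.toMeasure.prod Q.toMeasure =
      ∑ j, ∑ k, ((P j).toReal * (Q k).toReal) • f (j, k) := by
  rw [integral_prod f .of_finite]
  simp only [PMF.integral_eq_sum, Finset.smul_sum, mul_smul]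

theorem variance_popoviciu_cos_bound
    (n : ℕ) (hn : 1 ≤ n) (p : Fin n → ℝ) (hp : ∀ k, 0 ≤ p k)
    (hpsum : ∑ k, p k = 1) (α : Fin n → ℝ) (ε : ℝ) (hε : 0 ≤ ε)
    (hclose : ∀ j k, |α j - α k| ≤ 2 * ε) :
    ∑ j, ∑ k, p j * p k * (1 - Real.cos (α j - α k)) ≤ ε ^ 2 := by
  obtain ⟨P, hP⟩ := exists_pmf_toReal_eq hp hpsum
  simpa only [integral_prod_pmf_eq_sum_sum, smul_eq_mul, hP] using
    variance_popoviciu_cos_bound_general (μ := P.toMeasure) (X := α)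
      (measurable_of_finite α).aemeasurable (.of_forall fun z ↦ hclose z.1 z.2)
end

section
/- Let N ≥ 1 and d ≥ 3 be integers. Define 𝒫 ⊆ ℝ^(d−1) as the union of [0, 1/(2N))^(d−1) and [1/(2N), 1/N)^(d−1); define A = { (1/(2N))·Σ_{k=1}^{d−2} n_k e_k : each n_k ∈ {−1, 0, 1, …, 2N−1} } and B = { (k/N)·e_{d−1} : k ∈ {0, 1, …, N−1} }, where e_k are the standard basis vectors of ℝ^(d−1). Then the translates { 𝒫 + a + b : a ∈ A, b ∈ B } are pairwise disjoint, and their union contains the half-open unit cube [0, 1)^(d−1). In particular, the number of translates is |A|·|B| = N·(2N+1)^(d−2). -/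
/-!
Rescale by `2 * N`, so that the translates become integral and the integer parts of the coordinates
decide everything: `x` lies in the translate of `𝒫` by an integer vector `s` if and only if the
integer vector `⌊x⌋ - s` is `(0, …, 0)` or `(1, …, 1)`. The tiling is thus the statement that an
integer vector can be written in exactly one way as `ε (1, …, 1) + n + 2 k e` with `ε ∈ {0, 1}` and
`n` vanishing in the direction `e`. The `e`-coordinate is `ε + 2 k`, so `ε` is its parity, and the
other coordinates then determine `n`. Subtracting `ε` from an entry in `[0, 2 * N)` explains the
range `-1, …, 2 * N - 1` of the entries of `n`.
-/

/-- The tile `𝒫`: the two cubes of side `1 / (2 * N)` along the diagonal of the cube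
`[0, 1 / N) ^ ι`. -/
def twoCubes (K ι : Type*) [Field K] [LinearOrder K] (N : ℕ) : Set (ι → K) :=
  {z | ∀ i, 0 ≤ z i ∧ z i < 1 / (2 * (N : K))} ∪
    {z | ∀ i, 1 / (2 * (N : K)) ≤ z i ∧ z i < 1 / (N : K)}

section Translates

variable {ι : Type*} (K : Type*) [Field K]

/-- The point of the grid `(1 / (2 * N)) ℤ ^ ι` with integer coordinates `n`. -/
def gridPoint (N : ℕ) (n : ι → ℤ) : ι → K := fun i => (n i : K) / (2 * N)

/-- The integer coordinates of the translation vectors transverse to the coordinate `i₀`. -/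
def transverseBox (i₀ : ι) (N : ℕ) : Set (ι → ℤ) :=
  {n | (∀ i ≠ i₀, -1 ≤ n i ∧ n i ≤ 2 * (N : ℤ) - 1) ∧ n i₀ = 0}

/-- The set `A` of translation vectors, with `i₀` in the role of the last coordinate `d - 1`. -/
def transverseTranslations (i₀ : ι) (N : ℕ) : Set (ι → K) :=
  gridPoint K N '' transverseBox i₀ N

/-- The set `B` of translation vectors, with `i₀` in the role of the last coordinate `d - 1`. -/
def axialTranslations [DecidableEq ι] (i₀ : ι) (N : ℕ) : Set (ι → K) :=
  (fun k : ℕ => Pi.single i₀ ((k : K) / N)) '' Set.Iio N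

end Translates

section IntegerVectors

variable {ι : Type*}

theorem ncard_transverseBox [Fintype ι] (i₀ : ι) (N : ℕ) :
    (transverseBox i₀ N).ncard = (2 * N + 1) ^ (Fintype.card ι - 1) := by
  classical
  have box_eq : transverseBox i₀ N = (Fintype.piFinset fun i =>
      if i = i₀ then {0} else Finset.Icc (-1) (2 * (N : ℤ) - 1) : Finset (ι → ℤ)) := by
    ext n
    simp only [transverseBox, Set.mem_ofPred_eq, Finset.mem_coe, Fintype.mem_piFinset]
    refine ⟨fun ⟨h, h₀⟩ i => ?_, fun h => ⟨fun i hi => ?_, ?_⟩⟩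
    · split_ifs with hi
      · simpa [hi] using h₀
      · exact Finset.mem_Icc.2 (h i hi)
    · simpa [hi] using h i
    · simpa using h i₀
  have card_Icc : (Finset.Icc (-1) (2 * (N : ℤ) - 1)).card = 2 * N + 1 := by
    rw [Int.card_Icc]
    lia
  rw [box_eq, Set.ncard_coe_finset, Fintype.card_piFinset]
  simp [apply_ite Finset.card, Finset.prod_ite, Finset.filter_ne', card_Icc, -Int.card_Icc]

variable [DecidableEq ι]

theorem eq_and_eq_of_diagonal_add_eq {i₀ : ι} {ε ε' : ℤ}
    (hε : ε = 0 ∨ ε = 1) (hε' : ε' = 0 ∨ ε' = 1)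
    {n n' : ι → ℤ} (hn : n i₀ = 0) (hn' : n' i₀ = 0) {k k' : ℤ}
    (h : ∀ i, ε + (n + Pi.single i₀ (2 * k) : ι → ℤ) i =
      ε' + (n' + Pi.single i₀ (2 * k') : ι → ℤ) i) :
    n = n' ∧ k = k' := by
  have h₀ : ε + 2 * k = ε' + 2 * k' := by simpa [hn, hn'] using h i₀
  obtain rfl : ε = ε' := by lia
  obtain rfl : k = k' := by lia
  exact ⟨funext fun i => by simpa using h i, rfl⟩

theorem exists_eq_diagonal_add (i₀ : ι) {N : ℕ} {f : ι → ℤ}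
    (hf : ∀ i, 0 ≤ f i ∧ f i < 2 * (N : ℤ)) :
    ∃ ε : ℤ, (ε = 0 ∨ ε = 1) ∧ ∃ n ∈ transverseBox i₀ N, ∃ k < N,
      ∀ i, f i = ε + (n + Pi.single i₀ (2 * (k : ℤ)) : ι → ℤ) i := by
  obtain ⟨k, hk⟩ := Int.eq_ofNat_of_zero_le (Int.ediv_nonneg (hf i₀).1 zero_le_two)
  refine ⟨f i₀ % 2, Int.emod_two_eq_zero_or_one _,
    Function.update (fun i => f i - f i₀ % 2) i₀ 0,
    ⟨fun i hi => ?_, Function.update_self ..⟩, k, by grind, fun i => ?_⟩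
  · rw [Function.update_of_ne hi]
    grind
  · obtain rfl | hi := eq_or_ne i i₀
    · simp only [Pi.add_apply, Function.update_self, Pi.single_eq_same]
      lia
    · simp [hi]

end IntegerVectors

section CharZero

variable {ι K : Type*} [Field K] [CharZero K] {N : ℕ}

theorem gridPoint_injective (hN : N ≠ 0) :
    Function.Injective (gridPoint K N : (ι → ℤ) → ι → K) := by
  intro n n' h
  funext i
  have hi : (n i : K) / (2 * N) = n' i / (2 * N) := congrFun h i
  exact_mod_cast (div_left_inj' (by simpa using hN)).1 hi

theorem ncard_transverseTranslations [Fintype ι] (i₀ : ι) (hN : N ≠ 0) :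
    (transverseTranslations K i₀ N).ncard = (2 * N + 1) ^ (Fintype.card ι - 1) := by
  rw [transverseTranslations, Set.ncard_image_of_injective _ (gridPoint_injective hN),
    ncard_transverseBox]

variable [DecidableEq ι]

theorem ncard_axialTranslations (i₀ : ι) (N : ℕ) : (axialTranslations K i₀ N).ncard = N := by
  have single_injOn :
      (Set.Iio N).InjOn fun k : ℕ => (Pi.single i₀ ((k : K) / N) : ι → K) := by
    intro k hk k' _ h
    have hN : (N : K) ≠ 0 := Nat.cast_ne_zero.2 (Nat.ne_zero_of_lt hk)
    exact_mod_cast (div_left_inj' hN).1 (Pi.single_injective i₀ h)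
  rw [axialTranslations, single_injOn.ncard_image]
  simp

theorem gridPoint_add_single (i₀ : ι) (n : ι → ℤ) (k : ℕ) :
    gridPoint K N n + Pi.single i₀ ((k : K) / N) =
      gridPoint K N (n + Pi.single i₀ (2 * (k : ℤ))) := by
  funext i
  obtain rfl | hi := eq_or_ne i i₀
  · simp [gridPoint, add_div, mul_div_mul_left]
  · simp [gridPoint, hi]

end CharZero

section Tiling

variable {ι K : Type*} [Field K] [LinearOrder K] [IsStrictOrderedRing K] [FloorRing K] {N : ℕ}

theorem floor_mul_eq_iff {c : K} (hc : 0 < c) {t : K} {j : ℤ} :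
    ⌊c * t⌋ = j ↔ j / c ≤ t ∧ t < (j + 1) / c := by
  rw [Int.floor_eq_iff, div_le_iff₀' hc, lt_div_iff₀' hc]

theorem mem_twoCubes_iff_floor (hN : 0 < N) {z : ι → K} :
    z ∈ twoCubes K ι N ↔ ∃ ε : ℤ, (ε = 0 ∨ ε = 1) ∧ ∀ i, ⌊2 * (N : K) * z i⌋ = ε := by
  have hc : (0 : K) < 2 * N := by positivity
  have one_add_one_div : (1 + 1 : K) / (2 * N) = 1 / N := by field_simp; norm_num
  simp [twoCubes, floor_mul_eq_iff hc, or_and_right, exists_or, one_add_one_div]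

theorem mem_translate_twoCubes_iff_floor (hN : 0 < N) {s : ι → ℤ} {x : ι → K} :
    x ∈ (· + gridPoint K N s) '' twoCubes K ι N ↔
      ∃ ε : ℤ, (ε = 0 ∨ ε = 1) ∧ ∀ i, ⌊2 * (N : K) * x i⌋ = ε + s i := by
  have rescale (i : ι) : 2 * (N : K) * gridPoint K N s i = s i :=
    mul_div_cancel₀ _ (by positivity)
  rw [Set.image_add_right, Set.mem_preimage, mem_twoCubes_iff_floor hN]
  simp only [Pi.add_apply, Pi.neg_apply, ← sub_eq_add_neg, mul_sub, rescale,
    Int.floor_sub_intCast, sub_eq_iff_eq_add]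

variable [DecidableEq ι]

theorem pairwiseDisjoint_translate_twoCubes (i₀ : ι) (hN : 0 < N) :
    (transverseTranslations K i₀ N ×ˢ axialTranslations K i₀ N).PairwiseDisjoint
      fun w => (· + (w.1 + w.2)) '' twoCubes K ι N := by
  rintro ⟨_, _⟩ ⟨⟨n, ⟨-, hn⟩, rfl⟩, ⟨k, -, rfl⟩⟩ ⟨_, _⟩ ⟨⟨n', ⟨-, hn'⟩, rfl⟩, ⟨k', -, rfl⟩⟩ hne
  refine Set.disjoint_left.2 fun x hx hx' => hne ?_
  simp only [gridPoint_add_single, mem_translate_twoCubes_iff_floor hN] at hx hx'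
  obtain ⟨ε, hε, h⟩ := hx
  obtain ⟨ε', hε', h'⟩ := hx'
  obtain ⟨rfl, hk⟩ := eq_and_eq_of_diagonal_add_eq hε hε' hn hn' fun i => (h i).symm.trans (h' i)
  obtain rfl : k = k' := Nat.cast_injective hk
  rfl

theorem unitCube_subset_iUnion_translate_twoCubes (i₀ : ι) (hN : 0 < N) :
    {x : ι → K | ∀ i, 0 ≤ x i ∧ x i < 1} ⊆
      ⋃ a ∈ transverseTranslations K i₀ N, ⋃ b ∈ axialTranslations K i₀ N,
        (· + (a + b)) '' twoCubes K ι N := by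
  intro x hx
  have hc : (0 : K) < 2 * N := by positivity
  have floor_mem (i : ι) : 0 ≤ ⌊2 * (N : K) * x i⌋ ∧ ⌊2 * (N : K) * x i⌋ < 2 * (N : ℤ) := by
    refine ⟨Int.floor_nonneg.2 (mul_nonneg hc.le (hx i).1), Int.floor_lt.2 ?_⟩
    simpa using mul_lt_of_lt_one_right hc (hx i).2
  obtain ⟨ε, hε, n, hn, k, hk, h⟩ := exists_eq_diagonal_add i₀ floor_mem
  simp only [Set.mem_iUnion]
  refine ⟨gridPoint K N n, ⟨n, hn, rfl⟩, Pi.single i₀ ((k : K) / N), ⟨k, hk, rfl⟩, ?_⟩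
  rw [gridPoint_add_single, mem_translate_twoCubes_iff_floor hN]
  exact ⟨ε, hε, h⟩

theorem two_cubes_tiling_general [Fintype ι] (i₀ : ι) (hN : 0 < N) :
    (∀ a ∈ transverseTranslations K i₀ N, ∀ b ∈ axialTranslations K i₀ N,
      ∀ a' ∈ transverseTranslations K i₀ N, ∀ b' ∈ axialTranslations K i₀ N,
      (a, b) ≠ (a', b') →
        Disjoint ((· + (a + b)) '' twoCubes K ι N) ((· + (a' + b')) '' twoCubes K ι N)) ∧
    ({x : ι → K | ∀ i, 0 ≤ x i ∧ x i < 1} ⊆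
      ⋃ a ∈ transverseTranslations K i₀ N, ⋃ b ∈ axialTranslations K i₀ N,
        (· + (a + b)) '' twoCubes K ι N) ∧
    (transverseTranslations K i₀ N).ncard = (2 * N + 1) ^ (Fintype.card ι - 1) ∧
    (axialTranslations K i₀ N).ncard = N :=
  ⟨fun _ ha _ hb _ ha' _ hb' hne =>
      pairwiseDisjoint_translate_twoCubes i₀ hN ⟨ha, hb⟩ ⟨ha', hb'⟩ hne,
    unitCube_subset_iUnion_translate_twoCubes i₀ hN, ncard_transverseTranslations i₀ hN.ne',
    ncard_axialTranslations i₀ N⟩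

end Tiling

theorem transverseTranslations_last (K : Type*) [Field K] (m N : ℕ) :
    transverseTranslations K (Fin.last m) N = {a | ∃ n : Fin (m + 1) → ℤ,
      (∀ i, a i = (n i : K) / (2 * N)) ∧
      (∀ i : Fin (m + 1), i.val < m → -1 ≤ n i ∧ n i ≤ 2 * (N : ℤ) - 1) ∧
      (∀ i : Fin (m + 1), i.val = m → n i = 0)} := by
  have val_eq (i : Fin (m + 1)) : i.val = m ↔ i = Fin.last m := by simp [Fin.ext_iff]
  have val_lt (i : Fin (m + 1)) : i.val < m ↔ i ≠ Fin.last m := Fin.lt_last_iff_ne_last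
  ext a
  simp only [transverseTranslations, transverseBox, gridPoint, Set.mem_image, Set.mem_ofPred_eq,
    funext_iff, val_eq, val_lt, forall_eq, eq_comm (b := a _), and_comm (b := ∀ i, a i = _)]

theorem axialTranslations_last (K : Type*) [Field K] (m N : ℕ) :
    axialTranslations K (Fin.last m) N = {b | ∃ k : ℕ, k < N ∧
      ∀ i : Fin (m + 1), b i = if i.val = m then (k : K) / N else 0} := by
  ext b
  simp [axialTranslations, funext_iff, Pi.single_apply, Fin.ext_iff, eq_comm]

theorem two_cubes_tiling
    (N d : ℕ) (hN : 1 ≤ N) (hd : 3 ≤ d)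
    (P : Set (Fin (d - 1) → ℝ))
    (hP : P = {z | ∀ i, 0 ≤ z i ∧ z i < 1 / (2 * (N : ℝ))} ∪
              {z | ∀ i, 1 / (2 * (N : ℝ)) ≤ z i ∧ z i < 1 / (N : ℝ)})
    (A : Set (Fin (d - 1) → ℝ))
    (hA : A = {a | ∃ n : Fin (d - 1) → ℤ,
        (∀ i, a i = (n i : ℝ) / (2 * N)) ∧
        (∀ i : Fin (d - 1), i.val < d - 2 → -1 ≤ n i ∧ n i ≤ 2 * (N : ℤ) - 1) ∧
        (∀ i : Fin (d - 1), i.val = d - 2 → n i = 0)})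
    (B : Set (Fin (d - 1) → ℝ))
    (hB : B = {b | ∃ k : ℕ, k < N ∧
        ∀ i : Fin (d - 1), b i = if i.val = d - 2 then (k : ℝ) / N else 0}) :
    (∀ a ∈ A, ∀ b ∈ B, ∀ a' ∈ A, ∀ b' ∈ B, (a, b) ≠ (a', b') →
      Disjoint ((· + (a + b)) '' P) ((· + (a' + b')) '' P)) ∧
    ({x : Fin (d - 1) → ℝ | ∀ i, 0 ≤ x i ∧ x i < 1} ⊆
      ⋃ a ∈ A, ⋃ b ∈ B, (· + (a + b)) '' P) ∧
    A.ncard = (2 * N + 1) ^ (d - 2) ∧ B.ncard = N := by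
  obtain ⟨m, rfl⟩ : ∃ m, d = m + 2 := ⟨d - 2, by lia⟩
  obtain rfl : P = twoCubes ℝ (Fin (m + 1)) N := hP
  obtain rfl := hA.trans (transverseTranslations_last ℝ m N).symm
  obtain rfl := hB.trans (axialTranslations_last ℝ m N).symm
  simpa using two_cubes_tiling_general (K := ℝ) (Fin.last m) hN
end

section
/- Let N ≥ 1 and d ≥ 2 be integers. Define 𝒯 = { x ∈ ℝ^(d−1) : −1/(2N) ≤ x_i < 1/(2N) for all i, and −1/(2N) ≤ x_j − x_i < 1/(2N) for all j > i }, and for each i ∈ {1, …, d−1} let v^(i) ∈ ℝ^(d−1) be the vector whose i-th component is 2 and whose other components are all 1. Then for every x ∈ ℝ^(d−1) there exists a unique tuple of integers (n_1, …, n_{d−1}) such that x − (1/(2N))·Σ_i n_i v^(i) ∈ 𝒯. -/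
/-!
Put `c = 1 / (2 * N)` and adjoin to `x` a bottom coordinate equal to `0`, giving `y`. The conditions
defining the polytope then say that any two coordinates differ by less than `c`, ties being broken
by the order of the indices. For an integer vector `n` on the enlarged index set with `∑ n = 0`,
passing from `y` to `y - c • n` changes the differences with the bottom coordinate by exactly
`-c • ∑ n i • v i`, the sum being over the original indices. It therefore suffices that for every
`s` there is exactly one `n` with sum `s` such that `y - c • n` has spread less than `c`.

Existence: reducing `y` modulo `c` into an interval far enough to the right gives such a vector with
sum at most `s`, and lowering the largest coordinate by `c` keeps the spread while it raises the sum
of `n` by one. Uniqueness: any two `n` with small spread are comparable coordinatewise, so they are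
equal if their sums are.
-/

section LexSpread

variable {ι G : Type*} [LinearOrder ι] [AddCommGroup G] [LinearOrder G]

/-- Any two values of `z` differ by less than `c`, after an infinitesimal perturbation of `z`
which increases with the index. The perturbed order on values is encoded by `G ×ₗ ι`; it turns the
half-open conditions of the polytope (see `lexSpreadLT_iff`) into one symmetric strict
inequality. -/
def LexSpreadLT (c : G) (z : ι → G) : Prop :=
  ∀ i j, toLex (z i - c, i) < toLex (z j, j)

variable [IsOrderedAddMonoid G] {c : G}

theorem lexSpreadLT_iff (hc : 0 < c) {z : ι → G} :
    LexSpreadLT c z ↔ ∀ i j, i < j → z j - z i ∈ Set.Ico (-c) c := by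
  simp only [LexSpreadLT, Prod.Lex.toLex_lt_toLex, Set.mem_Ico, neg_le_sub_iff_le_add,
    ← sub_le_iff_le_add]
  constructor
  · intro h i j hij
    refine ⟨le_iff_lt_or_eq.mpr ((h i j).imp_right And.left), ?_⟩
    rcases h j i with h | ⟨-, h⟩
    · exact sub_lt_comm.mp h
    · exact absurd h hij.not_gt
  · intro h i j
    rcases lt_trichotomy i j with hij | rfl | hij
    · exact (le_iff_lt_or_eq.mp (h i j hij).1).imp_right (⟨·, hij⟩)
    · exact Or.inl (sub_lt_self _ hc)
    · exact Or.inl (sub_lt_comm.mp (h j i hij).2)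

namespace LexSpreadLT

theorem of_mem_Ico {a : G} {z : ι → G} (h : ∀ i, z i ∈ Set.Ico a (a + c)) : LexSpreadLT c z :=
  fun i j => Prod.Lex.toLex_lt_toLex.mpr <|
    Or.inl <| (sub_lt_iff_lt_add.mpr (h i).2).trans_le (h j).1

theorem pos [Nonempty ι] {z : ι → G} (hz : LexSpreadLT c z) : 0 < c := by
  obtain ⟨i⟩ := ‹Nonempty ι›
  simpa [Prod.Lex.toLex_lt_toLex] using hz i i

theorem exists_sub_single [Finite ι] [Nonempty ι] {z : ι → G} (hz : LexSpreadLT c z) :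
    ∃ a, LexSpreadLT c (z - Pi.single a c) := by
  have translate {x y : G} {i j : ι} (h : toLex (x, i) < toLex (y, j)) :
      toLex (x - c, i) < toLex (y - c, j) := by
    simpa only [Prod.Lex.toLex_lt_toLex, sub_lt_sub_iff_right, sub_left_inj] using h
  obtain ⟨a, ha⟩ := Finite.exists_max fun i => toLex (z i, i)
  have ha_lt {i : ι} (hi : i ≠ a) : toLex (z i, i) < toLex (z a, a) :=
    (ha i).lt_of_ne fun h => hi (congrArg (fun p => (ofLex p).2) h)
  refine ⟨a, fun i j => ?_⟩
  by_cases hi : i = a <;> by_cases hj : j = a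
  · simpa [hi, hj] using translate (hz a a)
  · simpa [hi, hj] using (translate (hz a a)).trans (hz a j)
  · simpa [hi, hj] using translate (ha_lt hi)
  · simpa [hi, hj] using hz i j

theorem le_or_ge {y : ι → G} {m n : ι → ℤ} (hm : LexSpreadLT c fun i => y i - m i • c)
    (hn : LexSpreadLT c fun i => y i - n i • c) : m ≤ n ∨ n ≤ m := by
  have key_le {p q : ℤ} (hpq : p < q) (i : ι) :
      toLex (y i - q • c, i) ≤ toLex (y i - p • c - c, i) := by
    have : Nonempty ι := ⟨i⟩
    refine Prod.Lex.toLex_mono ⟨?_, le_rfl⟩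
    rw [sub_sub, ← add_one_zsmul]
    exact sub_le_sub_left (zsmul_le_zsmul_left hm.pos.le hpq) _
  by_contra! h
  simp only [Pi.le_def, not_forall, not_le] at h
  obtain ⟨⟨a, ha⟩, b, hb⟩ := h
  exact lt_irrefl _ <| calc
    toLex (y a - m a • c, a) ≤ toLex (y a - n a • c - c, a) := key_le ha a
    _ < toLex (y b - n b • c, b) := hn a b
    _ ≤ toLex (y b - m b • c - c, b) := key_le hb b
    _ < toLex (y a - m a • c, a) := hm b a

theorem eq_of_sum_eq [Fintype ι] {y : ι → G} {m n : ι → ℤ}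
    (hm : LexSpreadLT c fun i => y i - m i • c) (hn : LexSpreadLT c fun i => y i - n i • c)
    (hsum : ∑ i, m i = ∑ i, n i) : m = n := by
  rcases hm.le_or_ge hn with h | h
  · exact h.eq_of_not_lt fun hlt => (Fintype.sum_strictMono hlt).ne hsum
  · exact (h.eq_of_not_lt fun hlt => (Fintype.sum_strictMono hlt).ne' hsum).symm

end LexSpreadLT

section Archimedean

variable [Fintype ι] [Nonempty ι] [Archimedean G]

theorem exists_sum_le_and_lexSpreadLT (hc : 0 < c) (y : ι → G) (s : ℤ) :
    ∃ n : ι → ℤ, ∑ i, n i ≤ s ∧ LexSpreadLT c fun i => y i - n i • c := by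
  let q : ι → ℤ := fun i => toIcoDiv hc 0 (y i)
  let k : ℤ := |∑ i, q i - s|
  refine ⟨fun i => q i - k, ?_, .of_mem_Ico (a := k • c) fun i => ?_⟩
  · have hcard : (1 : ℤ) ≤ Fintype.card ι := mod_cast Fintype.card_pos
    calc ∑ i, (q i - k) = ∑ i, q i - Fintype.card ι * k := by simp [Finset.sum_sub_distrib]
      _ ≤ ∑ i, q i - k := sub_le_sub_left (le_mul_of_one_le_left (abs_nonneg _) hcard) _
      _ ≤ s := sub_le_comm.mp (le_abs_self _)
  · have h := sub_toIcoDiv_zsmul_mem_Ico hc (0 + k • c) (y i)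
    rwa [toIcoDiv_add_zsmul', zero_add] at h

theorem existsUnique_sum_eq_and_lexSpreadLT (hc : 0 < c) (y : ι → G) (s : ℤ) :
    ∃! n : ι → ℤ, ∑ i, n i = s ∧ LexSpreadLT c fun i => y i - n i • c := by
  obtain ⟨n₀, hn₀, hy₀⟩ := exists_sum_le_and_lexSpreadLT hc y s
  refine existsUnique_of_exists_of_unique ?_ fun m n hm hn =>
    hm.2.eq_of_sum_eq hn.2 (hm.1.trans hn.1.symm)
  induction s, hn₀ using Int.leInduction with
  | base => exact ⟨n₀, rfl, hy₀⟩
  | succ s _ ih =>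
    obtain ⟨n, rfl, hn⟩ := ih
    obtain ⟨a, ha⟩ := hn.exists_sub_single
    refine ⟨n + Pi.single a 1, by simp [Finset.sum_add_distrib], ?_⟩
    convert ha using 1
    ext i
    by_cases hi : i = a <;> simp [hi, add_one_zsmul, sub_sub]

end Archimedean

end LexSpread

section Tiling

theorem sum_withBot {ι M : Type*} [Fintype ι] [AddCommMonoid M] (f : WithBot ι → M) :
    ∑ i, f i = f ⊥ + ∑ i : ι, f i :=
  Fintype.sum_option f

variable {ι G : Type*} [LinearOrder ι] [AddCommGroup G] [LinearOrder G]

/-- The polytope `𝒯`, with `c` in place of `1 / (2 * N)` and an arbitrary ordered index type. -/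
def halfOpenPolytope (ι : Type*) [LinearOrder ι] (c : G) : Set (ι → G) :=
  {x | (∀ i, x i ∈ Set.Ico (-c) c) ∧ ∀ i j, i < j → x j - x i ∈ Set.Ico (-c) c}

variable [IsOrderedAddMonoid G] {c : G}

theorem lexSpreadLT_withBot_iff (hc : 0 < c) {z : WithBot ι → G} :
    LexSpreadLT c z ↔ (fun i : ι => z i - z ⊥) ∈ halfOpenPolytope ι c := by
  simp [lexSpreadLT_iff hc, WithBot.forall, halfOpenPolytope, -Set.mem_Ico]

theorem sub_sum_zsmul_mem_halfOpenPolytope_iff [Fintype ι] (hc : 0 < c) {w : ι → ι → G}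
    (hw : ∀ i j, w i j = if j = i then c + c else c) (y : WithBot ι → G) {n : WithBot ι → ℤ}
    (hn : ∑ i, n i = 0) :
    (fun i : ι => y i - y ⊥) - ∑ i : ι, n i • w i ∈ halfOpenPolytope ι c ↔
      LexSpreadLT c fun i => y i - n i • c := by
  have hw' (i : ι) : w i = Pi.single i c + Function.const ι c := by
    ext j
    by_cases h : j = i <;> simp [hw, h]
  have hsum (j : ι) : (∑ i : ι, n i • w i) j = n j • c - n ⊥ • c := by
    rw [sum_withBot, add_eq_zero_iff_eq_neg] at hn
    simp [hn, hw', smul_add, Finset.sum_add_distrib, Finset.sum_smul, Pi.single_apply]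
  rw [lexSpreadLT_withBot_iff hc]
  congr! 1
  ext j
  rw [Pi.sub_apply, hsum, sub_sub_sub_comm]

theorem polytope_tiles_space_general [Fintype ι] [Archimedean G] (hc : 0 < c) {w : ι → ι → G}
    (hw : ∀ i j, w i j = if j = i then c + c else c) (x : ι → G) :
    ∃! n : ι → ℤ, x - ∑ i, n i • w i ∈ halfOpenPolytope ι c := by
  obtain ⟨y, rfl⟩ : ∃ y : WithBot ι → G, x = fun i : ι => y i - y ⊥ :=
    ⟨WithBot.recBotCoe 0 x, by simp⟩
  obtain ⟨n, ⟨hsum, hn⟩, huniq⟩ := existsUnique_sum_eq_and_lexSpreadLT hc y 0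
  refine ⟨fun i => n i, (sub_sum_zsmul_mem_halfOpenPolytope_iff hc hw y hsum).mpr hn,
    fun m hm => funext fun i => ?_⟩
  let m' : WithBot ι → ℤ := WithBot.recBotCoe (-∑ i, m i) m
  have hm' : ∑ i, m' i = 0 := by simp [sum_withBot, m']
  exact congrFun
    (huniq m' ⟨hm', (sub_sum_zsmul_mem_halfOpenPolytope_iff hc hw y hm').mp hm⟩) i

end Tiling

theorem polytope_tiles_space
    (N d : ℕ) (hN : 1 ≤ N) (hd : 2 ≤ d)
    (T : Set (Fin (d - 1) → ℝ))
    (hT : T = {x | (∀ i, -(1 / (2 * (N : ℝ))) ≤ x i ∧ x i < 1 / (2 * (N : ℝ))) ∧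
        (∀ i j : Fin (d - 1), i < j →
          -(1 / (2 * (N : ℝ))) ≤ x j - x i ∧ x j - x i < 1 / (2 * (N : ℝ)))})
    (v : Fin (d - 1) → (Fin (d - 1) → ℝ))
    (hv : ∀ i j, v i j = if j = i then 2 else 1) :
    ∀ x : Fin (d - 1) → ℝ, ∃! n : Fin (d - 1) → ℤ,
      (x - (1 / (2 * (N : ℝ))) • ∑ i, (n i : ℝ) • v i) ∈ T := by
  intro x
  simp only [hT, Finset.smul_sum, Int.cast_smul_eq_zsmul, smul_comm _ (_ : ℤ)]
  exact polytope_tiles_space_general (by positivity) (by simp [hv, mul_two, -one_div]) x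
end

section
/- Let D ≥ 1 be an integer and s > 0 a real number, and define 𝒯_s^(D) = { x ∈ ℝ^D : |x_i| ≤ s for all i, and |x_i − x_j| ≤ s for all i, j }. Then the D-dimensional Lebesgue measure of 𝒯_s^(D) equals (D+1)·s^D. -/
open MeasureTheory

/-! Write `x₀ = 0`, so that a point of `ℝ^ι` becomes a family indexed by `Option ι` and the
polytope is `|x_p - x_q| ≤ s` for all `p, q : Option ι`. The smallest entry of the family splits
the polytope into `card ι + 1` cells meeting in hyperplanes. Permuting the entries and subtracting
the new `x₀` is a linear action of a finite group, hence volume preserving, and it permutes the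
cells transitively. The cell whose smallest entry is `x₀` is the cube `[0, s]^ι`. -/

section Algebra

variable {ι R : Type*}

/-- Extension of a vector by the entry `0` at `none`. -/
def extendZero [Semiring R] : (ι → R) →ₗ[R] (Option ι → R) :=
  LinearMap.pi fun p => p.elim 0 LinearMap.proj

@[simp]
lemma extendZero_none [Semiring R] (x : ι → R) : extendZero x none = 0 := rfl

@[simp]
lemma extendZero_some [Semiring R] (x : ι → R) (i : ι) : extendZero x (some i) = x i := rfl

section Ring

variable [Ring R]

/-- The differences of the entries of a family with its entry at `none`. Its kernel is the line of
constant families, so it identifies families modulo constants with vectors; `extendZero` is the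
section taking the representative that vanishes at `none`. -/
def subNone : (Option ι → R) →ₗ[R] (ι → R) :=
  LinearMap.funLeft R R some - LinearMap.pi fun _ => LinearMap.proj none

@[simp]
lemma subNone_apply (v : Option ι → R) (i : ι) : subNone v i = v (some i) - v none := rfl

lemma extendZero_subNone_apply (v : Option ι → R) (p : Option ι) :
    extendZero (subNone v) p = v p - v none := by
  cases p <;> simp

lemma subNone_extendZero (x : ι → R) : subNone (extendZero x) = x := by
  ext i
  simp

lemma proj_comp_extendZero_injective [Nontrivial R] :
    Function.Injective fun p : Option ι => (LinearMap.proj p : (Option ι → R) →ₗ[R] R) ∘ₗ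
      extendZero := by
  classical
  intro p q hpq
  by_contra hne
  simpa [extendZero_subNone_apply, Ne.symm hne] using
    LinearMap.congr_fun hpq (subNone (Pi.single p 1))

end Ring

variable [CommRing R]

variable (ι R) in
/-- The action of the permutations of `Option ι` on families modulo constants, in the coordinates
given by `subNone`. -/
def permModConst : Representation R (Equiv.Perm (Option ι)) (ι → R) where
  toFun σ := subNone ∘ₗ LinearMap.funLeft R R ⇑σ⁻¹ ∘ₗ extendZero
  map_one' := LinearMap.ext subNone_extendZero
  map_mul' σ τ := by
    ext x i
    simp [LinearMap.funLeft_apply, extendZero_subNone_apply]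

lemma extendZero_permModConst (σ : Equiv.Perm (Option ι)) (x : ι → R) (p : Option ι) :
    extendZero (permModConst ι R σ x) (σ p) = extendZero x p - extendZero x (σ⁻¹ none) := by
  simp [permModConst, extendZero_subNone_apply, LinearMap.funLeft_apply]

end Algebra

section Haar

variable {E : Type*} [NormedAddCommGroup E] [NormedSpace ℝ E] [MeasurableSpace E] [BorelSpace E]
  [FiniteDimensional ℝ E] (μ : Measure E) [μ.IsAddHaarMeasure]

lemma addHaar_preimage_of_isOfFinOrder {f : E →ₗ[ℝ] E} (hf : IsOfFinOrder f) (A : Set E) :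
    μ (f ⁻¹' A) = μ A := by
  have hdet : |LinearMap.det f| = 1 := (LinearMap.det.isOfFinOrder hf).norm_eq_one
  have hdet_ne : LinearMap.det f ≠ 0 := abs_ne_zero.1 (hdet ▸ one_ne_zero)
  rw [Measure.addHaar_preimage_linearMap μ hdet_ne, abs_inv, hdet, inv_one, ENNReal.ofReal_one,
    one_mul]

lemma addHaar_eqLocus_eq_zero {F : Type*} [AddCommMonoid F] [Module ℝ F] {f g : E →ₗ[ℝ] F}
    (hfg : f ≠ g) : μ {x | f x = g x} = 0 :=
  Measure.addHaar_submodule μ (LinearMap.eqLocus f g) (mt LinearMap.eqLocus_eq_top.1 hfg)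

end Haar

section Polytope

variable {ι : Type*} {s : ℝ}

/-- The cell of the polytope on which the entry at `p` of the family extended by zero is smallest
and all the others exceed it by at most `s`. -/
def minCell (s : ℝ) (p : Option ι) : Set (ι → ℝ) :=
  {x | ∀ q, extendZero x q ∈ Set.Icc (extendZero x p) (extendZero x p + s)}

lemma minCell_none (hs : 0 ≤ s) : minCell s (none : Option ι) = Set.Icc 0 fun _ => s := by
  ext x
  simp [minCell, Option.forall, hs, Pi.le_def, forall_and]

lemma preimage_permModConst_minCell (σ : Equiv.Perm (Option ι)) (p : Option ι) :
    permModConst ι ℝ σ ⁻¹' minCell s (σ p) = minCell s p := by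
  ext x
  simp only [minCell, Set.mem_preimage, Set.mem_ofPred_eq]
  rw [← σ.forall_congr_right]
  simp only [extendZero_permModConst, sub_add_eq_add_sub, Set.mem_Icc, sub_le_sub_iff_right]

lemma iUnion_minCell [Finite ι] (s : ℝ) :
    ⋃ p : Option ι, minCell s p = {x | ∀ p q, |extendZero x p - extendZero x q| ≤ s} := by
  ext x
  simp only [Set.mem_iUnion, Set.mem_ofPred_eq]
  constructor
  · rintro ⟨m, hm⟩ p q
    simpa only [Real.dist_eq, add_sub_cancel_left] using Real.dist_le_of_mem_Icc (hm p) (hm q)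
  · intro hx
    obtain ⟨m, hm⟩ := Finite.exists_min (extendZero x)
    exact ⟨m, fun q => ⟨hm q, sub_le_iff_le_add'.1 (abs_le.1 (hx q m)).2⟩⟩

lemma forall_abs_extendZero_sub_le_iff (hs : 0 ≤ s) (x : ι → ℝ) :
    (∀ p q, |extendZero x p - extendZero x q| ≤ s) ↔
      (∀ i, |x i| ≤ s) ∧ ∀ i j, |x i - x j| ≤ s := by
  simp [Option.forall, hs, forall_and]

lemma measurableSet_minCell [Finite ι] (s : ℝ) (p : Option ι) : MeasurableSet (minCell s p) := by
  have hext : Continuous (extendZero : (ι → ℝ) →ₗ[ℝ] _) :=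
    LinearMap.continuous_of_finiteDimensional _
  simp only [minCell, Set.mem_Icc]
  measurability

variable [Fintype ι]

lemma pairwise_aedisjoint_minCell (s : ℝ) :
    Pairwise (Function.onFun (AEDisjoint volume) (minCell (ι := ι) s)) := by
  intro p q hpq
  refine measure_mono_null ?_
    (addHaar_eqLocus_eq_zero volume (proj_comp_extendZero_injective.ne hpq))
  rintro x ⟨hp, hq⟩
  exact le_antisymm (hp q).1 (hq p).1

lemma volume_minCell (hs : 0 ≤ s) (p : Option ι) :
    volume (minCell s p) = ENNReal.ofReal s ^ Fintype.card ι := by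
  classical
  let σ := Equiv.swap p none
  calc volume (minCell s p)
      = volume (permModConst ι ℝ σ ⁻¹' minCell s (σ p)) := by rw [preimage_permModConst_minCell]
    _ = volume (minCell s (σ p)) :=
        addHaar_preimage_of_isOfFinOrder volume
          ((permModConst ι ℝ).isOfFinOrder (isOfFinOrder_of_finite σ)) _
    _ = volume (Set.Icc (0 : ι → ℝ) fun _ => s) := by
        rw [Equiv.swap_apply_left, minCell_none hs]
    _ = ENNReal.ofReal s ^ Fintype.card ι := by simp [Real.volume_Icc_pi]

theorem volume_polytope_general (hs : 0 ≤ s) :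
    volume {x : ι → ℝ | (∀ i, |x i| ≤ s) ∧ ∀ i j, |x i - x j| ≤ s} =
      ENNReal.ofReal ((Fintype.card ι + 1) * s ^ Fintype.card ι) := by
  simp only [← forall_abs_extendZero_sub_le_iff hs]
  calc volume {x : ι → ℝ | ∀ p q, |extendZero x p - extendZero x q| ≤ s}
      = ∑ p : Option ι, volume (minCell s p) := by
        rw [← iUnion_minCell, measure_iUnion₀ (pairwise_aedisjoint_minCell s)
          fun p => (measurableSet_minCell s p).nullMeasurableSet, tsum_fintype]
    _ = (Fintype.card ι + 1 : ℕ) * ENNReal.ofReal s ^ Fintype.card ι := by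
        simp only [volume_minCell hs, Finset.sum_const, Finset.card_univ, Fintype.card_option,
          nsmul_eq_mul]
    _ = ENNReal.ofReal ((Fintype.card ι + 1) * s ^ Fintype.card ι) := by
        rw [ENNReal.ofReal_mul (by positivity), ENNReal.ofReal_pow hs, ← Nat.cast_add_one,
          ENNReal.ofReal_natCast]

end Polytope

theorem volume_polytope
    (D : ℕ) (hD : 1 ≤ D) (s : ℝ) (hs : 0 < s)
    (T : Set (Fin D → ℝ))
    (hT : T = {x | (∀ i, |x i| ≤ s) ∧ ∀ i j : Fin D, |x i - x j| ≤ s}) :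
    volume T = ENNReal.ofReal ((D + 1) * s ^ D) := by
  simpa only [hT, Fintype.card_fin] using volume_polytope_general (ι := Fin D) hs.le
end

section
/- Let d ≥ 2 and M ≥ 1 be integers, let N be a positive integer, let α_1, …, α_d be real numbers, and suppose there exist sets R_1, …, R_M ⊆ ℝ^(d−1) whose union contains [0, 1)^(d−1) and such that for each m, any two points z, y ∈ R_m satisfy |z_i − y_i| < 1/N and |(z_i − y_i) − (z_j − y_j)| < 1/N for all i, j ∈ {1, …, d−1}. Then there exist an integer q with 1 ≤ q ≤ M and integers l_1, …, l_d such that |(α_i − α_j)·q − (l_i − l_j)| < 1/N for all i, j ∈ {1, …, d}. -/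
/-!
The `m`-th multiples of the differences `α i - α i₀`, reduced modulo `1`, are points of the unit
cube. Among the first `M + 1` of them two, with multipliers `a < b`, share a cell. Their difference
is `(α i - α i₀) * (b - a)` minus an integer, so `q = b - a` works; the coordinate at `i₀`, where
this difference vanishes, accounts for the one coordinate absent from the cube.
-/

section Pigeonhole

variable {X τ : Type*} [Fintype τ]

theorem exists_lt_le_card_apply_eq (c : ℕ → τ) :
    ∃ a b, a < b ∧ b ≤ Fintype.card τ ∧ c a = c b := by
  obtain ⟨a, b, hab, hc⟩ := Fintype.exists_ne_map_eq_of_card_lt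
    (fun n : Fin (Fintype.card τ + 1) => c n) (by simp only [Fintype.card_fin, Nat.lt_succ_self])
  rcases hab.lt_or_gt with h | h
  · exact ⟨a, b, h, b.is_le, hc⟩
  · exact ⟨b, a, h, a.is_le, hc.symm⟩

theorem exists_lt_le_card_mem_of_forall_mem_iUnion {R : τ → Set X} {x : ℕ → X}
    (hx : ∀ n, x n ∈ ⋃ t, R t) :
    ∃ a b t, a < b ∧ b ≤ Fintype.card τ ∧ x a ∈ R t ∧ x b ∈ R t := by
  choose c hc using fun n => Set.mem_iUnion.1 (hx n)
  obtain ⟨a, b, hab, hb, hcab⟩ := exists_lt_le_card_apply_eq c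
  exact ⟨a, b, c b, hab, hb, hcab ▸ hc a, hc b⟩

end Pigeonhole

theorem abs_sub_lt_of_eq_zero_of_forall_ne {ι K : Type*} [AddCommGroup K] [LinearOrder K]
    [IsOrderedAddMonoid K] {ε : K} (hε : 0 < ε) {r : ι → K} {i₀ : ι} (h₀ : r i₀ = 0)
    (hr : ∀ i ≠ i₀, |r i| < ε) (hrr : ∀ i ≠ i₀, ∀ j ≠ i₀, |r i - r j| < ε) (i j : ι) :
    |r i - r j| < ε := by
  by_cases hi : i = i₀ <;> by_cases hj : j = i₀
  · simpa only [hi, hj, sub_self, abs_zero] using hε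
  · simpa only [hi, h₀, zero_sub, abs_neg] using hr j hj
  · simpa only [hj, h₀, sub_zero] using hr i hi
  · exact hrr i hi j hj

section FloorRing

variable {ι κ τ K : Type*} [Fintype τ] [CommRing K] [LinearOrder K] [FloorRing K]

theorem mul_sub_sub_floor_sub_floor (x s t : K) :
    x * (t - s) - (⌊x * t⌋ - ⌊x * s⌋) = Int.fract (x * t) - Int.fract (x * s) := by
  simp only [Int.fract]
  ring

variable [IsStrictOrderedRing K]

theorem exists_lt_le_card_fract_mul_mem_of_cover (β : κ → K) {R : τ → Set (κ → K)}
    (hcover : {x : κ → K | ∀ k, 0 ≤ x k ∧ x k < 1} ⊆ ⋃ t, R t) :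
    ∃ (a b : ℕ) (t : τ), a < b ∧ b ≤ Fintype.card τ ∧
      (fun k => Int.fract (β k * a)) ∈ R t ∧ (fun k => Int.fract (β k * b)) ∈ R t :=
  exists_lt_le_card_mem_of_forall_mem_iUnion (x := fun n k => Int.fract (β k * n)) fun _ =>
    hcover fun _ => ⟨Int.fract_nonneg _, Int.fract_lt_one _⟩

/-- The map `e` labels the indices other than `i₀` by coordinates of the cube, as `Fin.succ` does
for `i₀ = 0`. -/
theorem pigeonhole_cover_approx_general {ε : K} (hε : 0 < ε) (α : ι → K) {i₀ : ι} {e : κ → ι}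
    (he : ∀ i ≠ i₀, i ∈ Set.range e) {R : τ → Set (κ → K)}
    (hcover : {x : κ → K | ∀ k, 0 ≤ x k ∧ x k < 1} ⊆ ⋃ t, R t)
    (hcell : ∀ t, ∀ z ∈ R t, ∀ y ∈ R t, ∀ i j : κ,
      |z i - y i| < ε ∧ |(z i - y i) - (z j - y j)| < ε) :
    ∃ (q : ℤ) (l : ι → ℤ), 1 ≤ q ∧ q ≤ Fintype.card τ ∧
      ∀ i j : ι, |(α i - α j) * q - (l i - l j)| < ε := by
  let β : ι → K := fun i => α i - α i₀
  obtain ⟨a, b, t, hab, hb, ha_mem, hb_mem⟩ :=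
    exists_lt_le_card_fract_mul_mem_of_cover (β ∘ e) hcover
  have hclose := hcell t _ hb_mem _ ha_mem
  let l : ι → ℤ := fun i => ⌊β i * b⌋ - ⌊β i * a⌋
  let r : ι → K := fun i => Int.fract (β i * b) - Int.fract (β i * a)
  have hr_base : r i₀ = 0 := by simp only [r, β, sub_self, zero_mul]
  have hr_lt : ∀ i ≠ i₀, |r i| < ε := by
    intro i hi
    obtain ⟨k, rfl⟩ := he i hi
    exact (hclose k k).1
  have hr_sub_lt : ∀ i ≠ i₀, ∀ j ≠ i₀, |r i - r j| < ε := by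
    intro i hi j hj
    obtain ⟨k, rfl⟩ := he i hi
    obtain ⟨k', rfl⟩ := he j hj
    exact (hclose k k').2
  have hr_eq (i j : ι) : (α i - α j) * ((b - a : ℤ) : K) - (l i - l j) = r i - r j := by
    simp only [r, ← mul_sub_sub_floor_sub_floor, β, l]
    push_cast
    ring
  refine ⟨b - a, l, by omega, by omega, fun i j => ?_⟩
  rw [hr_eq]
  exact abs_sub_lt_of_eq_zero_of_forall_ne hε hr_base hr_lt hr_sub_lt i j

end FloorRing

theorem pigeonhole_cover_approx
    (d M : ℕ) (hd : 2 ≤ d) (hM : 1 ≤ M) (N : ℕ) (hN : 0 < N)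
    (α : Fin d → ℝ)
    (R : Fin M → Set (Fin (d - 1) → ℝ))
    (hcover : {x : Fin (d - 1) → ℝ | ∀ i, 0 ≤ x i ∧ x i < 1} ⊆ ⋃ m, R m)
    (hcell : ∀ m, ∀ z ∈ R m, ∀ y ∈ R m, ∀ i j : Fin (d - 1),
      |z i - y i| < 1 / N ∧ |(z i - y i) - (z j - y j)| < 1 / N) :
    ∃ (q : ℤ) (l : Fin d → ℤ), 1 ≤ q ∧ q ≤ M ∧
      ∀ i j : Fin d, |(α i - α j) * q - (l i - l j)| < 1 / N := by
  obtain ⟨n, rfl⟩ : ∃ n, d = n + 1 := ⟨d - 1, by omega⟩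
  simpa only [Fintype.card_fin] using pigeonhole_cover_approx_general (by positivity) α
    (e := Fin.succ) (fun _ => Fin.exists_succ_eq.2) hcover hcell
end
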